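/- arXiv:math/0602319 — 4 statements merged into one kernel-verified Lean document; each statement's English description precedes it below -/
import Mathlib

section
/- Let G1 be a connected k1-regular finite simple graph on n1 vertices with k1 odd, and let G2 be a finite simple graph (not necessarily connected) whose maximum degree is at most k2 and whose minimum degree is at least 1. If (k1² − k1)/2 ≥ k2, then the Cartesian product G1 × G2 is antimagic. -/
/-- The vertex sum at `v` under an edge labeling `f`: the sum of the labels of all
edges incident with `v`. -/
noncomputable def vertexSum {V : Type*} [Finite V] (G : SimpleGraph V)
    (f : Sym2 V → ℕ) (v : V) : ℕ :=
  ∑ e ∈ (G.incidenceSet v).toFinite.toFinset, f e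

/-- A graph is antimagic if there is a bijection from its edge set to `{1, ..., m}`
(`m` = number of edges) such that all vertex sums are pairwise distinct. -/
def IsAntimagic {V : Type*} [Finite V] (G : SimpleGraph V) : Prop :=
  ∃ f : Sym2 V → ℕ,
    Set.BijOn f G.edgeSet (Set.Icc 1 (Nat.card G.edgeSet)) ∧
    ∀ u v : V, u ≠ v → vertexSum G f u ≠ vertexSum G f v

lemma walk_bound {V : Type} [DecidableEq V] {G : SimpleGraph V} (f : Sym2 V → ℤ) (m : ℤ) (x : V) :
    ∀ {u v : V} (w : G.Walk u v), (∀ e ∈ w.edges, 1 ≤ f e ∧ f e ≤ m) →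
    w.edges.IsChain (fun a b => m + 1 ≤ f a + f b ∧ f a + f b ≤ m + 2) →
    ∀ a, w.edges.head? = some a →
    ((w.edges.map (fun e => if x ∈ e then (1:ℤ) else 0)).sum - (if u = x then 1 else 0)
        - (if v = x then 1 else 0)) * (m + 1) + 2 * (if v = x then 1 else 0)
      ≤ 2 * (w.edges.map (fun e => if x ∈ e then f e else 0)).sum - 2 * (if u = x then f a else 0) ∧
    2 * (w.edges.map (fun e => if x ∈ e then f e else 0)).sum - 2 * (if u = x then f a else 0) ≤
    ((w.edges.map (fun e => if x ∈ e then (1:ℤ) else 0)).sum - (if u = x then 1 else 0)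
        - (if v = x then 1 else 0)) * (m + 2) + 2 * m * (if v = x then 1 else 0) := by
  intro u v w
  induction w with
  | nil => simp
  | @cons u y v h p ih =>
    intro hb hc a ha
    have hne := h.ne
    simp only [SimpleGraph.Walk.edges_cons, List.head?_cons, Option.some.injEq] at ha
    subst ha
    have hfa := hb s(u, y) (by simp)
    cases hp : p.edges with
    | nil =>
      have : p.length = 0 := by rw [← SimpleGraph.Walk.length_edges, hp]; rfl
      have hyv := SimpleGraph.Walk.eq_of_length_eq_zero this
      subst hyv
      simp only [SimpleGraph.Walk.edges_cons, hp, List.map_cons, List.map_nil, List.sum_cons,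
        List.sum_nil, Sym2.mem_iff, @eq_comm _ x]
      by_cases h1 : u = x
      · have h2 : y ≠ x := fun h => hne (h1.trans h.symm)
        simp [h1, h2]
      · by_cases h2 : y = x
        · simp [h1, h2]; subst h2; constructor <;> linarith
        · simp [h1, h2]
    | cons b l =>
      have ih' := ih (fun e he => hb e (by simp [he])) (by
        rw [SimpleGraph.Walk.edges_cons] at hc; exact hc.tail) b (by simp [hp])
      have hab : m + 1 ≤ f s(u, y) + f b ∧ f s(u, y) + f b ≤ m + 2 := by
        rw [SimpleGraph.Walk.edges_cons, hp] at hc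
        exact (List.isChain_cons_cons.1 hc).1
      simp only [SimpleGraph.Walk.edges_cons, List.map_cons, List.sum_cons, Sym2.mem_iff,
        @eq_comm _ x]
      generalize (p.edges.map (fun e => if x ∈ e then (1:ℤ) else 0)).sum = c at *
      generalize (p.edges.map (fun e => if x ∈ e then f e else 0)).sum = S at *
      by_cases h1 : u = x
      · have h2 : y ≠ x := fun h => hne (h1.trans h.symm)
        simp only [h1, h2, if_true, if_false, true_or] at ih' ⊢
        constructor <;> linarith
      · by_cases h2 : y = x
        · simp only [h1, h2, if_true, if_false, or_true] at ih' hab ⊢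
          constructor <;> linarith
        · simp only [h1, h2, if_false, or_false] at ih' ⊢
          constructor <;> linarith

lemma walk_bound' {V : Type} [DecidableEq V] {G : SimpleGraph V} (f : Sym2 V → ℤ) (m : ℤ) (x : V)
    {u v : V} (w : G.Walk u v) (hne : w.edges ≠ []) (hb : ∀ e ∈ w.edges, 1 ≤ f e ∧ f e ≤ m)
    (hc : w.edges.IsChain (fun a b => m + 1 ≤ f a + f b ∧ f a + f b ≤ m + 2)) :
    (w.edges.map (fun e => if x ∈ e then (1:ℤ) else 0)).sum * (m + 1) -
      ((if u = x then 1 else 0) + (if v = x then 1 else 0)) * (m - 1)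
      ≤ 2 * (w.edges.map (fun e => if x ∈ e then f e else 0)).sum ∧
    2 * (w.edges.map (fun e => if x ∈ e then f e else 0)).sum ≤
    (w.edges.map (fun e => if x ∈ e then (1:ℤ) else 0)).sum * (m + 2) +
      ((if u = x then 1 else 0) + (if v = x then 1 else 0)) * (m - 2) := by
  obtain ⟨a, l, hl⟩ := List.exists_cons_of_ne_nil hne
  have h := walk_bound f m x w hb hc a (by simp [hl])
  have ha := hb a (by simp [hl])
  by_cases h1 : u = x <;> by_cases h2 : v = x <;> simp only [h1, h2, if_true, if_false] at h ⊢ <;>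
    constructor <;> linarith

lemma walk_parity {V : Type} [DecidableEq V] {G : SimpleGraph V} (x : V) {u v : V} (w : G.Walk u v) :
    ∃ p : ℕ, (w.edges.map (fun e => if x ∈ e then (1:ℕ) else 0)).sum +
      ((if u = x then 1 else 0) + (if v = x then 1 else 0)) = 2 * p := by
  induction w with
  | @nil u => exact ⟨if u = x then 1 else 0, by simp only [SimpleGraph.Walk.edges_nil, List.map_nil, List.sum_nil]; ring⟩
  | @cons u y v h p ih =>
    obtain ⟨q, hq⟩ := ih
    have hne := h.ne
    simp only [SimpleGraph.Walk.edges_cons, List.map_cons, List.sum_cons, Sym2.mem_iff,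
        @eq_comm _ x]
    by_cases h1 : u = x
    · have h2 : y ≠ x := fun h => hne (h1.trans h.symm)
      simp only [h1, h2, if_true, if_false, true_or] at hq ⊢
      exact ⟨q+1, by omega⟩
    · by_cases h2 : y = x
      · simp only [h1, h2, if_true, if_false, or_true] at hq ⊢
        exact ⟨q, by omega⟩
      · simp only [h1, h2, if_false, or_false] at hq ⊢
        exact ⟨q, by omega⟩

/-- A trail candidate. -/
abbrev WW {V : Type} (G : SimpleGraph V) := Σ u : V, Σ v : V, G.Walk u v

/-- Number of ends of the trail at `x`. -/
def WW.ends {V : Type} [DecidableEq V] {G : SimpleGraph V} (x : V) (t : WW G) : ℕ :=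
  (if t.1 = x then 1 else 0) + (if t.2.1 = x then 1 else 0)

/-- Edges of the trail. -/
def WW.edges {V : Type} {G : SimpleGraph V} (t : WW G) : List (Sym2 V) := t.2.2.edges

lemma exists_trails {V : Type} [Fintype V] [DecidableEq V] (G : SimpleGraph V) [DecidableRel G.Adj]
    (hodd : ∀ v, Odd (G.degree v)) :
    ∃ T : List (WW G), (∀ t ∈ T, t.edges ≠ []) ∧ ((T.flatMap WW.edges : List _) : Multiset _) = G.edgeFinset.val ∧
      ∀ x, (T.map (WW.ends x)).sum = 1 := by
  let P : ℕ → Prop := fun n => ∃ T : Multiset (WW G), T.card = n ∧ (∀ t ∈ T, t.edges ≠ []) ∧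
    (T.bind (fun t => (t.edges : Multiset _))) = G.edgeFinset.val
  have h0 : ∃ n, P n := by
    have : ∀ e : G.edgeSet, ∃ t : WW G, t.edges = [e.1] := by
      rintro ⟨e, he⟩
      induction e with | _ a b =>
      have he' : G.Adj a b := he
      exact ⟨⟨a, b, SimpleGraph.Walk.cons he' .nil⟩, by simp [WW.edges]⟩
    choose t ht using this
    refine ⟨_, (Finset.univ : Finset G.edgeSet).val.map t, rfl, ?_, ?_⟩
    · intro s hs
      obtain ⟨e, -, rfl⟩ := Multiset.mem_map.1 hs
      simp [ht]
    · rw [Multiset.bind_map]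
      simp only [ht, Multiset.coe_singleton, Multiset.bind_singleton]
      have : G.edgeFinset = Finset.univ.map (Function.Embedding.subtype (· ∈ G.edgeSet)) := by
        ext e; simp
      rw [this]; rfl
  classical
  obtain ⟨T, hcard, hne, hE⟩ := Nat.find_spec h0
  have hmin := fun {n} => Nat.find_min h0 (m := n)
  rw [← hcard] at hmin
  have hsmall : ∀ x, (T.map (WW.ends x)).sum < 3 := by
    intro x
    by_contra hge
    push Not at hge
    have key : ∀ R : Multiset (WW G), 0 < (R.map (WW.ends x)).sum → ∃ t ∈ R, 0 < t.ends x := by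
      intro R hR
      by_contra hcon
      push Not at hcon
      have : (R.map (WW.ends x)).sum = 0 := by
        apply Multiset.sum_eq_zero
        intro a ha
        obtain ⟨t, ht, rfl⟩ := Multiset.mem_map.1 ha
        have := hcon t ht; omega
      omega
    obtain ⟨t, ht, htx⟩ := key T (by omega)
    obtain ⟨R, rfl⟩ := Multiset.exists_cons_of_mem ht
    have ht2 : t.ends x ≤ 2 := by unfold WW.ends; split_ifs <;> omega
    rw [Multiset.map_cons, Multiset.sum_cons] at hge
    obtain ⟨t', ht', htx'⟩ := key R (by omega)
    obtain ⟨R', rfl⟩ := Multiset.exists_cons_of_mem ht'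
    have h1 : ∃ (u : V) (w : G.Walk u x), (w.edges : Multiset (Sym2 V)) = t.edges := by
      obtain ⟨a, b, w⟩ := t
      by_cases hb : b = x
      · subst hb; exact ⟨a, w, rfl⟩
      · by_cases ha : a = x
        · subst ha; exact ⟨b, w.reverse, by simp [WW.edges]⟩
        · simp [WW.ends, ha, hb] at htx
    have h2 : ∃ (u : V) (w : G.Walk x u), (w.edges : Multiset (Sym2 V)) = t'.edges := by
      obtain ⟨a, b, w⟩ := t'
      by_cases ha : a = x
      · subst ha; exact ⟨b, w, rfl⟩
      · by_cases hb : b = x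
        · subst hb; exact ⟨a, w.reverse, by simp [WW.edges]⟩
        · simp [WW.ends, ha, hb] at htx'
    obtain ⟨u, w, hw⟩ := h1
    obtain ⟨u', w', hw'⟩ := h2
    have hedges : ((WW.edges (⟨u, u', w.append w'⟩ : WW G) : List _) : Multiset (Sym2 V))
        = t.edges + t'.edges := by
      rw [← hw, ← hw']; simp [WW.edges, SimpleGraph.Walk.edges_append]
    refine hmin (n := R'.card + 1) (by simp) ⟨(⟨u, u', w.append w'⟩ : WW G) ::ₘ R', by simp, ?_, ?_⟩
    · intro s hs
      rcases Multiset.mem_cons.1 hs with rfl | hs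
      · intro h0
        rw [h0] at hedges
        have h3 := congrArg Multiset.card hedges
        have := hne t (by simp)
        have h4 := List.length_pos_iff.2 this
        simp at h3
        omega
      · exact hne s (by simp [hs])
    · rw [Multiset.cons_bind, hedges, ← hE, Multiset.cons_bind, Multiset.cons_bind, add_assoc]
  have hpar : ∀ x, ∃ p : ℕ, G.degree x + (T.map (WW.ends x)).sum = 2 * p := by
    intro x
    have h1 : G.degree x = (T.map (fun t => (t.edges.map (fun e => if x ∈ e then (1:ℕ) else 0)).sum)).sum := by
      have : G.degree x = (G.edgeFinset.val.map (fun e => if x ∈ e then (1:ℕ) else 0)).sum := by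
        change _ = ∑ e ∈ G.edgeFinset, _
        rw [← Finset.sum_filter, ← SimpleGraph.incidenceFinset_eq_filter]
        simp
      rw [this, ← hE, Multiset.map_bind, Multiset.sum_bind]
      simp
    rw [h1, ← Multiset.sum_map_add]
    have h2 : ∀ t : WW G, ∃ p : ℕ, (t.edges.map (fun e => if x ∈ e then (1:ℕ) else 0)).sum + t.ends x = 2 * p :=
      fun t => walk_parity x t.2.2
    choose p hp using h2
    simp only [hp]
    exact ⟨_, Multiset.sum_map_mul_left⟩
  refine ⟨T.toList, by simpa using hne, ?_, ?_⟩
  · rw [← hE, ← Multiset.coe_bind, Multiset.coe_toList]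
  · intro x
    have h1 : (T.toList.map (WW.ends x)).sum = (T.map (WW.ends x)).sum := by
      rw [← Multiset.sum_coe, ← Multiset.map_coe, Multiset.coe_toList]
    rw [h1]
    obtain ⟨p, hp⟩ := hpar x
    obtain ⟨q, hq⟩ := hodd x
    have := hsmall x
    omega

lemma vertexSum_eq_sum_edges {V : Type} [Fintype V] [DecidableEq V] (G : SimpleGraph V)
    [DecidableRel G.Adj] (f : Sym2 V → ℕ) (x : V) :
    vertexSum G f x = ∑ e ∈ G.edgeFinset, if x ∈ e then f e else 0 := by
  unfold vertexSum
  rw [← Finset.sum_filter, ← SimpleGraph.incidenceFinset_eq_filter]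
  congr 1
  ext e; simp

lemma vertexSum_eq_sum_nbr {V : Type} [Fintype V] [DecidableEq V] (G : SimpleGraph V)
    [DecidableRel G.Adj] (f : Sym2 V → ℕ) (x : V) :
    vertexSum G f x = ∑ y ∈ G.neighborFinset x, f s(x, y) := by
  unfold vertexSum
  symm
  apply Finset.sum_nbij (fun y => s(x, y))
  · intro y hy
    simpa [SimpleGraph.mk'_mem_incidenceSet_left_iff] using hy
  · intro a _ b _ h
    exact Sym2.congr_right.1 h
  · intro e he
    simp only [Set.Finite.coe_toFinset] at he
    obtain ⟨h1, h2⟩ := he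
    obtain ⟨y, rfl⟩ := h2
    exact ⟨y, by simpa using h1, rfl⟩
  · intros; rfl

/-- Zigzag labels. -/
def zig (m i : ℕ) : ℕ := if i % 2 = 0 then i / 2 + 1 else m - i / 2

lemma exists_balanced {V : Type} [Fintype V] [DecidableEq V] (G : SimpleGraph V)
    [DecidableRel G.Adj] (k : ℕ) (hk : Odd k) (hreg : ∀ v, G.degree v = k) :
    ∃ g : Sym2 V → ℕ, Set.BijOn g G.edgeSet (Set.Icc 1 G.edgeFinset.card) ∧
      ∀ x y, 2 * vertexSum G g x + 3 ≤ 2 * vertexSum G g y + k + 2 * G.edgeFinset.card := by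
  obtain ⟨T, hne, hE, hends⟩ := exists_trails G (fun v => by rw [hreg]; exact hk)
  set L := T.flatMap WW.edges with hL
  set m := G.edgeFinset.card with hm
  have hlen : L.length = m := by
    rw [← Multiset.coe_card, hE]; rfl
  have hnd : L.Nodup := by
    rw [← Multiset.coe_nodup, hE]; exact G.edgeFinset.nodup
  have hmem : ∀ e, e ∈ L ↔ e ∈ G.edgeSet := by
    intro e
    rw [← Multiset.mem_coe, hE, Finset.mem_val, SimpleGraph.mem_edgeFinset]
  let g : Sym2 V → ℕ := fun e => zig m (L.idxOf e)
  have hgi : ∀ i (hi : i < L.length), g L[i] = zig m i := by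
    intro i hi
    simp only [g]
    rw [hnd.idxOf_getElem]
  have hbd : ∀ e ∈ L, 1 ≤ g e ∧ g e ≤ m := by
    intro e he
    obtain ⟨i, hi, rfl⟩ := List.getElem_of_mem he
    rw [hgi i hi]
    unfold zig
    split_ifs <;> omega
  have hchain : L.IsChain (fun a b => (m:ℤ) + 1 ≤ (g a : ℤ) + g b ∧ (g a : ℤ) + g b ≤ m + 2) := by
    rw [List.isChain_iff_getElem]
    intro i hi
    rw [hgi i (by omega), hgi (i+1) hi]
    unfold zig
    split_ifs <;> omega
  refine ⟨g, ⟨?_, ?_, ?_⟩, ?_⟩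
  · intro e he
    exact hbd e ((hmem e).2 he)
  · intro a ha b hb hab
    obtain ⟨i, hi, rfl⟩ := List.getElem_of_mem ((hmem a).2 ha)
    obtain ⟨j, hj, rfl⟩ := List.getElem_of_mem ((hmem b).2 hb)
    rw [hgi i hi, hgi j hj] at hab
    have : i = j := by
      unfold zig at hab
      split_ifs at hab <;> omega
    subst this; rfl
  · intro t ht
    obtain ⟨h1, h2⟩ := ht
    by_cases hc : 2 * (t - 1) < m
    · refine ⟨L[2 * (t-1)], (hmem _).1 (List.getElem_mem _), ?_⟩
      rw [hgi]; unfold zig; split_ifs <;> omega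
    · refine ⟨L[2 * (m - t) + 1]'(by omega), (hmem _).1 (List.getElem_mem _), ?_⟩
      rw [hgi]; unfold zig; split_ifs <;> omega
  · have hdeg : ∀ x, (T.map (fun t => (t.edges.map (fun e => if x ∈ e then (1:ℤ) else 0)).sum)).sum = k := by
      intro x
      have h1 : (G.degree x : ℤ) = (G.edgeFinset.val.map (fun e => if x ∈ e then (1:ℤ) else 0)).sum := by
        change _ = ∑ e ∈ G.edgeFinset, _
        rw [← Finset.sum_filter, ← SimpleGraph.incidenceFinset_eq_filter]
        simp
      rw [hreg, ← hE, Multiset.map_coe, Multiset.sum_coe, hL, List.map_flatMap, List.flatMap_def, List.sum_flatten, List.map_map] at h1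
      exact h1.symm
    have hsum : ∀ x, (T.map (fun t => (t.edges.map (fun e => if x ∈ e then (g e:ℤ) else 0)).sum)).sum
        = vertexSum G g x := by
      intro x
      have h1 : (vertexSum G g x : ℤ) = (G.edgeFinset.val.map (fun e => if x ∈ e then (g e:ℤ) else 0)).sum := by
        rw [vertexSum_eq_sum_edges]
        push_cast
        rfl
      rw [← hE, Multiset.map_coe, Multiset.sum_coe, hL, List.map_flatMap, List.flatMap_def, List.sum_flatten, List.map_map] at h1
      exact h1.symm
    have hT : ∀ x, ∀ T' : List (WW G), T' ⊆ T →
        (T'.map (fun t => (t.edges.map (fun e => if x ∈ e then (1:ℤ) else 0)).sum)).sum * (m + 1)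
          - ((T'.map (WW.ends x)).sum : ℕ) * ((m:ℤ) - 1) ≤
          2 * (T'.map (fun t => (t.edges.map (fun e => if x ∈ e then (g e:ℤ) else 0)).sum)).sum ∧
        2 * (T'.map (fun t => (t.edges.map (fun e => if x ∈ e then (g e:ℤ) else 0)).sum)).sum ≤
        (T'.map (fun t => (t.edges.map (fun e => if x ∈ e then (1:ℤ) else 0)).sum)).sum * (m + 2)
          + ((T'.map (WW.ends x)).sum : ℕ) * ((m:ℤ) - 2) := by
      intro x T'
      induction T' with
      | nil => simp
      | cons t R ih =>
        intro hsub
        rw [List.cons_subset] at hsub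
        have ih' := ih hsub.2
        have hinf : t.edges <:+: L := by
          obtain ⟨A, B, hAB⟩ := List.append_of_mem hsub.1
          exact ⟨A.flatMap WW.edges, B.flatMap WW.edges, by rw [hL, hAB]; simp⟩
        have hw := walk_bound' (fun e => (g e : ℤ)) m x t.2.2 (hne t hsub.1)
          (fun e he => by
            have := hbd e (hinf.subset he)
            constructor
            · exact_mod_cast this.1
            · exact_mod_cast this.2) (by
            obtain ⟨A, B, hAB⟩ := hinf
            rw [← hAB] at hchain
            exact hchain.left_of_append.right_of_append)
        simp only [List.map_cons, List.sum_cons]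
        have he : ((WW.ends x t : ℕ) : ℤ) = (if t.1 = x then 1 else 0) + (if t.2.1 = x then 1 else 0) := by
          unfold WW.ends; push_cast; rfl
        push_cast
        rw [he]
        change (t.edges.map _).sum * _ - _ ≤ 2 * (t.edges.map _).sum ∧ 2 * (t.edges.map _).sum ≤ (t.edges.map _).sum * _ + _ at hw
        push_cast at ih'
        constructor <;> linarith [hw.1, hw.2, ih'.1, ih'.2]
    intro x y
    have hx := (hT x T (List.Subset.refl _)).2
    have hy := (hT y T (List.Subset.refl _)).1
    rw [hdeg, hsum, hends] at hx hy
    have : (2 * vertexSum G g x + 3 : ℤ) ≤ 2 * vertexSum G g y + k + 2 * m := by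
      push_cast at hx hy
      linarith
    exact_mod_cast this

lemma exists_rank {V : Type} [Fintype V] (n : ℕ) (hn : Fintype.card V = n) (T : V → ℕ) :
    ∃ r : V ≃ Fin n, ∀ x y, r x ≤ r y → T x ≤ T y := by
  let e := Fintype.equivFinOfCardEq hn
  refine ⟨e.trans (Tuple.sort (T ∘ e.symm)).symm, fun x y h => ?_⟩
  have := Tuple.monotone_sort (T ∘ e.symm) h
  simpa using this

/-- The labeling of the product. -/
noncomputable def prodLabel {V₁ V₂ : Type} (g : Sym2 V₁ → ℕ) (h : Sym2 V₂ → ℕ) (r : V₂ → ℕ)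
    (p : V₁ → ℕ) (n₁ m₁ m₂ : ℕ) (e : Sym2 (V₁ × V₂)) : ℕ :=
  open Classical in
  if (e.map Prod.snd).IsDiag then n₁ * m₂ + r e.out.1.2 * m₁ + g (e.map Prod.fst)
  else n₁ * h (e.map Prod.snd) + p e.out.1.1 + 1

lemma prodLabel_left {V₁ V₂ : Type} (g : Sym2 V₁ → ℕ) (h : Sym2 V₂ → ℕ) (r : V₂ → ℕ)
    (p : V₁ → ℕ) (n₁ m₁ m₂ : ℕ) (x y : V₁) (u : V₂) :
    prodLabel g h r p n₁ m₁ m₂ s((x, u), (y, u)) = n₁ * m₂ + r u * m₁ + g s(x, y) := by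
  have h1 := Sym2.out_fst_mem s((x, u), (y, u))
  have h2 : (Quot.out s((x, u), (y, u))).1.2 = u := by
    rcases Sym2.mem_iff.1 h1 with h | h <;> rw [h]
  simp [prodLabel, h2]

lemma prodLabel_right {V₁ V₂ : Type} (g : Sym2 V₁ → ℕ) (h : Sym2 V₂ → ℕ) (r : V₂ → ℕ)
    (p : V₁ → ℕ) (n₁ m₁ m₂ : ℕ) (x : V₁) (u w : V₂) (huw : u ≠ w) :
    prodLabel g h r p n₁ m₁ m₂ s((x, u), (x, w)) = n₁ * h s(u, w) + p x + 1 := by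
  have h1 := Sym2.out_fst_mem s((x, u), (x, w))
  have h2 : (Quot.out s((x, u), (x, w))).1.1 = x := by
    rcases Sym2.mem_iff.1 h1 with h | h <;> rw [h]
  simp [prodLabel, h2, huw]

lemma prodLabel_bij {V₁ V₂ : Type} [Fintype V₁] [Fintype V₂]
    (G₁ : SimpleGraph V₁) (G₂ : SimpleGraph V₂) (g : Sym2 V₁ → ℕ) (h : Sym2 V₂ → ℕ)
    (n₁ n₂ m₁ m₂ : ℕ) (r : V₂ ≃ Fin n₂) (p : V₁ ≃ Fin n₁)
    (hg : Set.BijOn g G₁.edgeSet (Set.Icc 1 m₁)) (hh : Set.BijOn h G₂.edgeSet (Set.Iio m₂)) :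
    Set.BijOn (prodLabel g h (fun u => r u) (fun x => p x) n₁ m₁ m₂) (G₁ □ G₂).edgeSet
      (Set.Icc 1 (n₁ * m₂ + n₂ * m₁)) := by
  have cases : ∀ e ∈ (G₁ □ G₂).edgeSet,
      (∃ x y u, s(x, y) ∈ G₁.edgeSet ∧ e = s((x, u), (y, u))) ∨
      (∃ x u w, s(u, w) ∈ G₂.edgeSet ∧ e = s((x, u), (x, w))) := by
    intro e he
    induction e with | _ a b =>
    obtain ⟨a1, a2⟩ := a
    obtain ⟨b1, b2⟩ := b
    rw [SimpleGraph.mem_edgeSet, SimpleGraph.boxProd_adj] at he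
    rcases he with ⟨h1, h2⟩ | ⟨h1, h2⟩
    · simp only at h1 h2; subst h2; exact Or.inl ⟨_, _, _, h1, rfl⟩
    · simp only at h1 h2; subst h2; exact Or.inr ⟨_, _, _, h1, rfl⟩
  have hne : ∀ u w, s(u, w) ∈ G₂.edgeSet → u ≠ w := fun u w h => SimpleGraph.Adj.ne h
  have small : ∀ x u w, s(u, w) ∈ G₂.edgeSet → n₁ * h s(u, w) + p x + 1 ≤ n₁ * m₂ := by
    intro x u w huw
    have h1 : h s(u, w) + 1 ≤ m₂ := hh.mapsTo huw
    have h2 := (p x).2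
    calc _ ≤ n₁ * (h s(u, w) + 1) := by rw [mul_add]; omega
      _ ≤ _ := Nat.mul_le_mul_left _ h1
  refine ⟨?_, ?_, ?_⟩
  · intro e he
    rcases cases e he with ⟨x, y, u, hxy, rfl⟩ | ⟨x, u, w, huw, rfl⟩
    · rw [prodLabel_left]
      obtain ⟨h1, h2⟩ := hg.mapsTo hxy
      have h3 : ((r u : ℕ) + 1) * m₁ ≤ n₂ * m₁ := Nat.mul_le_mul_right _ (r u).2
      rw [add_mul] at h3
      constructor <;> omega
    · rw [prodLabel_right _ _ _ _ _ _ _ _ _ _ (hne _ _ huw)]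
      have := small x u w huw
      constructor <;> omega
  · intro e he e' he' heq
    rcases cases e he with ⟨x, y, u, hxy, rfl⟩ | ⟨x, u, w, huw, rfl⟩ <;>
    rcases cases e' he' with ⟨x', y', u', hxy', rfl⟩ | ⟨x', u', w', huw', rfl⟩
    · rw [prodLabel_left, prodLabel_left] at heq
      obtain ⟨h1, h2⟩ := hg.mapsTo hxy
      obtain ⟨h3, h4⟩ := hg.mapsTo hxy'
      have hr : (r u : ℕ) = r u' := by
        rcases lt_trichotomy (r u : ℕ) (r u') with hlt | heq | hlt
        · have := Nat.mul_le_mul_right m₁ hlt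
          rw [Nat.succ_mul] at this
          omega
        · exact heq
        · have := Nat.mul_le_mul_right m₁ hlt
          rw [Nat.succ_mul] at this
          omega
      have hgg := hg.injOn hxy hxy' (by rw [hr] at heq; omega)
      have hu : u = u' := r.injective (Fin.ext hr)
      subst hu
      have := congrArg (Sym2.map (fun z => (z, u))) hgg
      simpa using this
    · rw [prodLabel_left, prodLabel_right _ _ _ _ _ _ _ _ _ _ (hne _ _ huw')] at heq
      obtain ⟨h1, h2⟩ := hg.mapsTo hxy
      have := small x' _ _ huw'
      omega
    · rw [prodLabel_left, prodLabel_right _ _ _ _ _ _ _ _ _ _ (hne _ _ huw)] at heq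
      obtain ⟨h1, h2⟩ := hg.mapsTo hxy'
      have := small x _ _ huw
      omega
    · rw [prodLabel_right _ _ _ _ _ _ _ _ _ _ (hne _ _ huw),
        prodLabel_right _ _ _ _ _ _ _ _ _ _ (hne _ _ huw')] at heq
      have h1 := (p x).2
      have h2 := (p x').2
      have hr : h s(u, w) = h s(u', w') := by
        rcases lt_trichotomy (h s(u, w)) (h s(u', w')) with hlt | heq | hlt
        · have := Nat.mul_le_mul_left n₁ hlt
          rw [Nat.mul_succ] at this
          omega
        · exact heq
        · have := Nat.mul_le_mul_left n₁ hlt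
          rw [Nat.mul_succ] at this
          omega
      have hhh := hh.injOn huw huw' hr
      have hx : x = x' := p.injective (Fin.ext (by rw [hr] at heq; omega))
      subst hx
      have := congrArg (Sym2.map (fun z => (x, z))) hhh
      simpa using this
  · intro t ht
    obtain ⟨ht1, ht2⟩ := ht
    by_cases hc : t ≤ n₁ * m₂
    · have hn : 0 < n₁ := by
        rcases Nat.eq_zero_or_pos n₁ with h0 | h0
        · subst h0; omega
        · exact h0
      have hq : (t - 1) / n₁ < m₂ := by
        rw [Nat.div_lt_iff_lt_mul hn, mul_comm]; omega
      obtain ⟨e, he, heq⟩ := hh.surjOn hq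
      induction e with | _ u w =>
      refine ⟨s((p.symm ⟨(t - 1) % n₁, Nat.mod_lt _ hn⟩, u), (p.symm ⟨(t - 1) % n₁, Nat.mod_lt _ hn⟩, w)), ?_, ?_⟩
      · rw [SimpleGraph.mem_edgeSet, SimpleGraph.boxProd_adj_right]; exact he
      · rw [prodLabel_right _ _ _ _ _ _ _ _ _ _ (hne _ _ he), heq]
        simp only [Equiv.apply_symm_apply]
        have := Nat.div_add_mod (t - 1) n₁
        omega
    · have hn : 0 < m₁ := by
        rcases Nat.eq_zero_or_pos m₁ with h0 | h0
        · subst h0; omega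
        · exact h0
      have hq : (t - n₁ * m₂ - 1) / m₁ < n₂ := by
        rw [Nat.div_lt_iff_lt_mul hn]; omega
      have hmod := Nat.mod_lt (t - n₁ * m₂ - 1) hn
      obtain ⟨e, he, heq⟩ := hg.surjOn
        (show (t - n₁ * m₂ - 1) % m₁ + 1 ∈ Set.Icc 1 m₁ from ⟨by omega, by omega⟩)
      induction e with | _ x y =>
      refine ⟨s((x, r.symm ⟨_, hq⟩), (y, r.symm ⟨_, hq⟩)), ?_, ?_⟩
      · rw [SimpleGraph.mem_edgeSet, SimpleGraph.boxProd_adj_left]; exact he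
      · rw [prodLabel_left, heq]
        simp only [Equiv.apply_symm_apply]
        have := Nat.div_add_mod (t - n₁ * m₂ - 1) m₁
        rw [mul_comm] at this
        omega

lemma prodLabel_sum {V₁ V₂ : Type} [Fintype V₁] [Fintype V₂] [DecidableEq V₁] [DecidableEq V₂]
    (G₁ : SimpleGraph V₁) (G₂ : SimpleGraph V₂) [DecidableRel G₁.Adj] [DecidableRel G₂.Adj]
    (g : Sym2 V₁ → ℕ) (h : Sym2 V₂ → ℕ) (r : V₂ → ℕ)
    (p : V₁ → ℕ) (n₁ m₁ m₂ : ℕ) (x : V₁) (u : V₂) :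
    vertexSum (G₁ □ G₂) (prodLabel g h r p n₁ m₁ m₂) (x, u) =
      G₁.degree x * (n₁ * m₂ + r u * m₁) + vertexSum G₁ g x +
      (n₁ * vertexSum G₂ h u + G₂.degree u * (p x + 1)) := by
  classical
  rw [vertexSum_eq_sum_nbr, SimpleGraph.neighborFinset_boxProd, Finset.sum_disjUnion]
  congr 1
  · rw [vertexSum_eq_sum_nbr, Finset.sum_product]
    simp only [Finset.sum_singleton, prodLabel_left]
    rw [Finset.sum_add_distrib]
    simp
  · rw [vertexSum_eq_sum_nbr, Finset.sum_product]
    simp only [Finset.sum_singleton]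
    have : ∀ w ∈ G₂.neighborFinset u, prodLabel g h r p n₁ m₁ m₂ s((x, u), (x, w)) =
        n₁ * h s(u, w) + (p x + 1) := by
      intro w hw
      rw [prodLabel_right]
      · ring
      · exact SimpleGraph.Adj.ne (by simpa using hw)
    rw [Finset.sum_congr rfl this, Finset.sum_add_distrib, Finset.mul_sum]
    simp

theorem boxProd_antimagic_odd_connected {V₁ V₂ : Type} [Finite V₁] [Finite V₂]
    {n₁ k₁ k₂ : ℕ} (G₁ : SimpleGraph V₁) (G₂ : SimpleGraph V₂)
    (hn₁ : Nat.card V₁ = n₁)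
    (hreg : ∀ v : V₁, Nat.card (G₁.neighborSet v) = k₁)
    (hodd : Odd k₁) (hconn : G₁.Connected)
    (hmax : ∀ v : V₂, Nat.card (G₂.neighborSet v) ≤ k₂)
    (hmin : ∀ v : V₂, 1 ≤ Nat.card (G₂.neighborSet v))
    (hineq : k₂ ≤ (k₁ ^ 2 - k₁) / 2) :
    IsAntimagic (G₁ □ G₂) := by
  classical
  have := Fintype.ofFinite V₁
  have := Fintype.ofFinite V₂
  simp only [Nat.card_eq_fintype_card, SimpleGraph.card_neighborSet_eq_degree] at hn₁ hreg hmax hmin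
  obtain ⟨g, hg, hspread⟩ := exists_balanced G₁ k₁ hodd hreg
  have hhand := G₁.sum_degrees_eq_twice_card_edges
  simp only [hreg, Finset.sum_const, Finset.card_univ, smul_eq_mul, hn₁] at hhand
  obtain ⟨h, hh⟩ : ∃ h : Sym2 V₂ → ℕ, Set.BijOn h G₂.edgeSet (Set.Iio G₂.edgeFinset.card) := by
    apply Set.Finite.exists_bijOn_of_encard_eq (Set.toFinite _)
    rw [← SimpleGraph.coe_edgeFinset, Set.encard_coe_eq_coe_finsetCard, ← Finset.coe_range,
      Set.encard_coe_eq_coe_finsetCard, Finset.card_range]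
  obtain ⟨p, hp⟩ := exists_rank _ hn₁ (fun x => vertexSum G₁ g x)
  obtain ⟨r, hr⟩ := exists_rank _ rfl
    (fun u => n₁ * vertexSum G₂ h u + G₂.degree u)
  have hbij := prodLabel_bij G₁ G₂ g h _ _ _ _ r p hg hh
  set m₁ := G₁.edgeFinset.card
  set m₂ := G₂.edgeFinset.card
  set F := prodLabel g h (fun u => r u) (fun x => p x) n₁ m₁ m₂ with hF
  have hlt1 : ∀ x y u, p x < p y → vertexSum (G₁ □ G₂) F (x, u) < vertexSum (G₁ □ G₂) F (y, u) := by
    intro x y u hxy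
    rw [hF, prodLabel_sum, prodLabel_sum, hreg, hreg]
    have h1 := hp x y hxy.le
    have h2 : G₂.degree u * ((p x : ℕ) + 1) < G₂.degree u * ((p y : ℕ) + 1) :=
      Nat.mul_lt_mul_of_pos_left (by simpa using hxy) (hmin u)
    omega
  have hlt2 : ∀ x y u w, r u < r w →
      vertexSum (G₁ □ G₂) F (x, u) < vertexSum (G₁ □ G₂) F (y, w) := by
    intro x y u w huw
    rw [hF, prodLabel_sum, prodLabel_sum, hreg, hreg]
    have h1 := hr u w huw.le
    have h2 := hspread x y
    have h3 : ((r u : ℕ) + 1) * m₁ ≤ (r w : ℕ) * m₁ := Nat.mul_le_mul_right _ huw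
    have h4 : k₁ * (((r u : ℕ) + 1) * m₁) ≤ k₁ * ((r w : ℕ) * m₁) := Nat.mul_le_mul_left _ h3
    have h5 : 2 * G₂.degree u + k₁ ≤ k₁ ^ 2 := by
      have := hmax u
      have h6 : k₁ ≤ k₁ ^ 2 := Nat.le_self_pow (by norm_num) _
      omega
    have h6 : (p x : ℕ) + 1 ≤ n₁ := (p x).2
    have h7 : G₂.degree w * 1 ≤ G₂.degree w * ((p y : ℕ) + 1) := Nat.mul_le_mul_left _ (by omega)
    have hk : 1 ≤ k₁ := hodd.pos
    have h8 : (2 * G₂.degree u + k₁) * (p x : ℕ) ≤ k₁ ^ 2 * (p x : ℕ) := Nat.mul_le_mul_right _ h5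
    zify at *
    have h9 : ((k₁:ℤ) ^ 2 - k₁) * ((p x : ℕ) + 1) ≤ ((k₁:ℤ) ^ 2 - k₁) * n₁ :=
      mul_le_mul_of_nonneg_left h6 (by nlinarith)
    have h10 : (k₁ : ℤ) * (n₁ * k₁) = k₁ * (2 * m₁) := by rw [hhand]
    have h11 : 0 ≤ ((k₁ : ℤ) - 1) ^ 2 := sq_nonneg _
    linarith
  refine ⟨F, ?_, ?_⟩
  · have : Nat.card (G₁ □ G₂).edgeSet = n₁ * m₂ + Fintype.card V₂ * m₁ := by
      rw [Nat.card_congr (Set.BijOn.equiv _ hbij)]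
      simp
    rw [this]
    exact hbij
  · rintro ⟨x, u⟩ ⟨y, w⟩ hne
    by_cases huw : u = w
    · subst huw
      have hxy : p x ≠ p y := fun h => hne (by rw [p.injective h])
      rcases lt_or_gt_of_ne hxy with hl | hl
      · exact (hlt1 _ _ _ hl).ne
      · exact (hlt1 _ _ _ hl).ne'
    · have : r u ≠ r w := fun h => huw (r.injective h)
      rcases lt_or_gt_of_ne this with hl | hl
      · exact (hlt2 _ _ _ _ hl).ne
      · exact (hlt2 _ _ _ _ hl).ne'
end

section
/- Let G1 be a connected k1-regular finite simple graph on n1 vertices with k1 even, and let G2 be a finite simple graph (not necessarily connected) whose maximum degree is at most k2 and whose minimum degree is at least 1. If k1²/2 ≥ k2 and k1, k2 are not both equal to 2, then the Cartesian product G1 × G2 is antimagic. -/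
theorem am_cyc (m : ℕ) : ∃ a : ℕ → ℕ, Set.BijOn a (Set.Iio m) (Set.Icc 1 m) ∧
    (∀ j, j + 1 < m → m ≤ a j + a (j+1) ∧ a j + a (j+1) ≤ m + 2) ∧
    (0 < m → m ≤ a (m-1) + a 0 ∧ a (m-1) + a 0 ≤ m + 2) := by
  let a : ℕ → ℕ := fun j =>
    if j < m/2 then (if j % 2 = 0 then j + 1 else m - j)
    else if j < m - m/2 then m/2 + 1
    else (if (j - m % 2) % 2 = 0 then m - j else j + 1)
  have hmaps : ∀ j, j < m → 1 ≤ a j ∧ a j ≤ m := by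
    intro j hj
    simp only [a]
    split_ifs <;> omega
  have hinj : ∀ i, i < m → ∀ j, j < m → a i = a j → i = j := by
    intro i hi j hj h
    simp only [a] at h
    split_ifs at h <;> omega
  refine ⟨a, ⟨fun j hj => hmaps j hj, fun i hi j hj h => hinj i hi j hj h, ?_⟩, ?_, ?_⟩
  · have := Finset.surjOn_of_injOn_of_card_le (s := Finset.range m) (t := Finset.Icc 1 m) a
      (fun j hj => by
        have := hmaps j (by simpa using hj)
        simpa using this)
      (fun i hi j hj h => hinj i (by simpa using hi) j (by simpa using hj) h) (by simp)
    simpa using this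
  · intro j hj
    simp only [a]
    split_ifs <;> omega
  · intro hm
    simp only [a]
    split_ifs <;> omega

theorem am_euler {V : Type*} [Fintype V] [DecidableEq V] (G : SimpleGraph V) [DecidableRel G.Adj]
    (hc : G.Connected) (he : ∀ v, Even (G.degree v)) :
    ∃ (u : V) (p : G.Walk u u), p.IsEulerian := by
  let S : Set ℕ := {n | ∃ (u v : V) (p : G.Walk u v), p.IsTrail ∧ p.length = n}
  have hne : S.Nonempty := by
    obtain ⟨u⟩ := hc.nonempty
    exact ⟨0, u, u, SimpleGraph.Walk.nil, by simp, by simp⟩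
  have hbd : BddAbove S := ⟨G.edgeFinset.card, by
    rintro n ⟨u, v, p, hp, rfl⟩
    exact hp.length_le_card_edgeFinset⟩
  obtain ⟨u, v, p, hp, hlen⟩ := Nat.sSup_mem hne hbd
  have hmax : ∀ (x y : V) (q : G.Walk x y), q.IsTrail → q.length ≤ p.length := by
    intro x y q hq
    rw [hlen]
    exact le_csSup hbd ⟨x, y, q, hq, rfl⟩
  have hall : ∀ (x y : V) (q : G.Walk x y), q.IsTrail → q.length = p.length →
      ∀ w, G.Adj x w → s(x, w) ∈ q.edges := by
    intro x y q hq hl w hw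
    by_contra hnot
    have := hmax w y (SimpleGraph.Walk.cons hw.symm q) (by
      rw [SimpleGraph.Walk.isTrail_cons]
      exact ⟨hq, by rwa [Sym2.eq_swap]⟩)
    simp at this
    omega
  have huv : u = v := by
    by_contra hne
    have h1 := (hp.even_countP_edges_iff u)
    have h2 : Even (p.edges.countP (fun e => u ∈ e)) := by
      have hcard : p.edges.countP (fun e => u ∈ e) = G.degree u := by
        rw [← G.card_incidenceFinset_eq_degree, List.countP_eq_length_filter,
          ← List.toFinset_card_of_nodup (hp.edges_nodup.filter _)]
        congr 1
        ext e
        simp only [List.mem_toFinset, List.mem_filter, decide_eq_true_eq,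
          SimpleGraph.mem_incidenceFinset]
        constructor
        · rintro ⟨h, h'⟩
          exact ⟨p.edges_subset_edgeSet h, h'⟩
        · rintro ⟨h, h'⟩
          obtain ⟨w, rfl⟩ := h'
          exact ⟨hall u v p hp rfl w h, by simp⟩
      rw [hcard]
      exact he u
    exact ((h1.1 h2) hne).1 rfl
  subst huv
  refine ⟨u, p, hp.isEulerian_of_forall_mem ?_⟩
  have hloc : ∀ x ∈ p.support, ∀ w, G.Adj x w → s(x, w) ∈ p.edges := by
    intro x hx w hw
    have := hall x x (p.rotate x hx) (by simpa using hp) (by simp) w hw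
    exact (p.rotate_edges x hx).perm.mem_iff.1 this
  have hsup : ∀ x, x ∈ p.support := by
    intro x
    by_contra hx
    obtain ⟨q⟩ := hc.preconnected u x
    obtain ⟨d, -, hd1, hd2⟩ := q.exists_boundary_dart {y | y ∈ p.support} (by simp) hx
    exact hd2 (p.snd_mem_support_of_mem_edges (hloc _ hd1 _ d.adj))
  intro e he
  induction e with
  | _ x y => exact hloc x (hsup x) y he

theorem am_vs {V : Type*} [Fintype V] [DecidableEq V] (G : SimpleGraph V) [DecidableRel G.Adj]
    (f : Sym2 V → ℕ) (v : V) : vertexSum G f v = ∑ w ∈ G.neighborFinset v, f s(v, w) := by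
  unfold vertexSum
  symm
  apply Finset.sum_bij (fun w _ => s(v, w))
  · intro w hw
    simpa using hw
  · intro a _ b _ h
    exact Sym2.congr_right.1 h
  · intro e he
    simp only [Set.Finite.mem_toFinset] at he
    obtain ⟨h, w, rfl⟩ := he
    exact ⟨w, by simpa using h, rfl⟩
  · intros; rfl

theorem am_sum {V : Type*} [DecidableEq V] (w : ℕ → V) (m : ℕ) (hw : w m = w 0) (v : V)
    (hne : ∀ j, j < m → w j ≠ w (j+1)) (a : ℕ → ℕ) :
    (∑ j ∈ Finset.range m, if v ∈ s(w j, w (j+1)) then a j else 0) =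
      ∑ j ∈ Finset.range m, if w j = v then a j + a (if j = 0 then m - 1 else j - 1) else 0 := by
  let F : ℕ → ℕ := fun i => if w i = v then a (if i = 0 then m - 1 else i - 1) else 0
  have hF : ∑ j ∈ Finset.range m, F (j+1) = ∑ j ∈ Finset.range m, F j := by
    have h1 := Finset.sum_range_succ F m
    have h2 := Finset.sum_range_succ' F m
    have h3 : F m = F 0 := by
      simp only [F, hw]
      by_cases hm : m = 0 <;> simp [hm]
    omega
  have h1 : ∀ j ∈ Finset.range m, (if v ∈ s(w j, w (j+1)) then a j else 0) =
      (if w j = v then a j else 0) + F (j+1) := by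
    intro j hj
    have := hne j (by simpa using hj)
    simp only [F, Sym2.mem_iff]
    by_cases h : w j = v
    · have h' : w (j+1) ≠ v := fun h' => this (h.trans h'.symm)
      simp [h, h']
    · by_cases h' : w (j+1) = v
      · simp [h, h']
      · simp [h, h', Ne.symm h, Ne.symm h']
  rw [Finset.sum_congr rfl h1, Finset.sum_add_distrib, hF, ← Finset.sum_add_distrib]
  refine Finset.sum_congr rfl fun j _ => ?_
  simp only [F]
  by_cases h : w j = v <;> simp [h]

theorem am_label {V : Type*} [Fintype V] [DecidableEq V] (G : SimpleGraph V) [DecidableRel G.Adj]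
    (hc : G.Connected) (k : ℕ) (hk : Even k) (hd : ∀ v, G.degree v = k) :
    ∃ (g : Sym2 V → ℕ) (L : ℕ), Set.BijOn g G.edgeSet (Set.Icc 1 G.edgeFinset.card) ∧
      ∀ v, L ≤ vertexSum G g v ∧ vertexSum G g v ≤ L + k := by
  obtain ⟨u, p, hp⟩ := am_euler G hc (fun v => by rw [hd]; exact hk)
  obtain ⟨a, ha, ha1, ha2⟩ := am_cyc p.edges.length
  have hnd := hp.isTrail.edges_nodup
  have hmem : ∀ e, e ∈ p.edges ↔ e ∈ G.edgeSet := fun e => hp.mem_edges_iff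
  have hcard : G.edgeFinset.card = p.edges.length := by
    rw [← List.toFinset_card_of_nodup hnd]
    congr 1
    ext e
    simp [hmem]
  have hinc : ∀ (g : Sym2 V → ℕ) v, vertexSum G g v =
      ∑ j ∈ Finset.range p.edges.length,
        if v ∈ s(p.getVert j, p.getVert (j+1)) then g s(p.getVert j, p.getVert (j+1)) else 0 := by
    intro g v
    have h1 : vertexSum G g v = ∑ e ∈ p.edges.toFinset, if v ∈ e then g e else 0 := by
      rw [← Finset.sum_filter]
      unfold vertexSum
      congr 1
      ext e
      simp [hmem, SimpleGraph.incidenceSet]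
    rw [h1, Finset.sum_range]
    symm
    refine Finset.sum_bij (fun (j : Fin p.edges.length) _ => p.edges[j]) ?_ ?_ ?_ ?_
    · intro j _
      simp
    · intro i _ j _ h
      exact hnd.injective_get h
    · intro e he
      obtain ⟨n, hn, rfl⟩ := List.mem_iff_getElem.1 (List.mem_toFinset.1 he)
      exact ⟨⟨n, hn⟩, Finset.mem_univ _, rfl⟩
    · intro j _
      simp [SimpleGraph.Walk.getElem_edges]
  have hne : ∀ j, j < p.edges.length → p.getVert j ≠ p.getVert (j+1) := by
    intro j hj
    exact (p.adj_getVert_succ (by simpa using hj)).ne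
  have hcl : p.getVert p.edges.length = p.getVert 0 := by simp
  let c : V → ℕ := fun v => ((Finset.range p.edges.length).filter (fun j => p.getVert j = v)).card
  have hkc : ∀ v, k = 2 * c v := by
    intro v
    have h1 := hinc (fun _ => 1) v
    rw [am_vs, am_sum _ _ hcl v hne (fun _ => 1), ← Finset.sum_filter] at h1
    simp [hd] at h1
    simp only [c]
    rw [h1]
    simp
    ring
  let g : Sym2 V → ℕ := fun e => a (p.edges.idxOf e)
  refine ⟨g, k / 2 * p.edges.length, ?_, ?_⟩
  · rw [hcard]
    refine ha.comp ⟨?_, ?_, ?_⟩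
    · intro e he
      exact List.idxOf_lt_length_iff.2 ((hmem e).2 he)
    · intro e he e' he' h
      exact (List.idxOf_inj ((hmem e).2 he)).1 h
    · intro j hj
      refine ⟨p.edges[j]'hj, (hmem _).1 (List.getElem_mem _), ?_⟩
      exact hnd.idxOf_getElem j hj
  · intro v
    have hs : vertexSum G g v = ∑ j ∈ (Finset.range p.edges.length).filter
        (fun j => p.getVert j = v),
        (a j + a (if j = 0 then p.edges.length - 1 else j - 1)) := by
      rw [hinc, Finset.sum_filter, ← am_sum _ _ hcl v hne a]
      refine Finset.sum_congr rfl fun j hj => ?_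
      have hj' : j < p.edges.length := by simpa using hj
      have : g s(p.getVert j, p.getVert (j+1)) = a j := by
        simp only [g]
        rw [← SimpleGraph.Walk.getElem_edges hj', hnd.idxOf_getElem j hj']
      rw [this]
    have hb : ∀ j ∈ (Finset.range p.edges.length).filter (fun j => p.getVert j = v),
        p.edges.length ≤ (a j + a (if j = 0 then p.edges.length - 1 else j - 1)) ∧
        (a j + a (if j = 0 then p.edges.length - 1 else j - 1)) ≤ p.edges.length + 2 := by
      intro j hj
      have hj' : j < p.edges.length := (by simpa using hj : _ ∧ _).1
      generalize p.edges.length = m at *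
      rcases j with _ | j
      · have := ha2 (by omega)
        simp only [if_true]
        omega
      · have := ha1 j hj'
        simp only [Nat.succ_ne_zero, if_false, Nat.add_sub_cancel]
        omega
    have h1 := Finset.card_nsmul_le_sum _ _ _ (fun j hj => (hb j hj).1)
    have h2 := Finset.sum_le_card_nsmul _ _ _ (fun j hj => (hb j hj).2)
    rw [← hs] at h1 h2
    have hc2 : k / 2 = c v := by have := hkc v; omega
    have hk2 := hkc v
    simp only [smul_eq_mul] at h1 h2
    change c v * _ ≤ _ at h1
    change _ ≤ c v * _ at h2
    rw [hc2]
    refine ⟨h1, h2.trans ?_⟩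
    rw [mul_add]
    omega

theorem am_sort {V : Type*} [Fintype V] (s : V → ℕ) :
    ∃ ρ : V ≃ Fin (Fintype.card V), ∀ x y, ρ x < ρ y → s x ≤ s y := by
  let e := Fintype.equivFin V
  have hm := Tuple.monotone_sort (s ∘ e.symm)
  refine ⟨e.trans (Tuple.sort (s ∘ e.symm)).symm, fun x y h => ?_⟩
  have := hm h.le
  simpa using this

theorem am_enum {V : Type*} [Fintype V] [DecidableEq V] (G : SimpleGraph V) [DecidableRel G.Adj] :
    ∃ b : Sym2 V → ℕ, Set.BijOn b G.edgeSet (Set.Iio G.edgeFinset.card) := by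
  classical
  let E := G.edgeFinset.equivFin
  refine ⟨fun e => if h : e ∈ G.edgeFinset then E ⟨e, h⟩ else 0, ?_, ?_, ?_⟩
  · intro e he
    have h : e ∈ G.edgeFinset := by simpa using he
    simp only [dif_pos h]
    exact (E ⟨e, h⟩).2
  · intro e he e' he' hh
    have h : e ∈ G.edgeFinset := by simpa using he
    have h' : e' ∈ G.edgeFinset := by simpa using he'
    simp only [dif_pos h, dif_pos h'] at hh
    have := E.injective (Fin.ext hh)
    simpa using this
  · intro j hj
    have h := (E.symm ⟨j, hj⟩).2
    refine ⟨E.symm ⟨j, hj⟩, SimpleGraph.mem_edgeFinset.1 h, ?_⟩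
    simp only [dif_pos h]
    simp

theorem am_dm {n x y r t : ℕ} (hr : r < n) (ht : t < n) (h : n * x + r = n * y + t) :
    x = y ∧ r = t := by
  have hx : x = y := by
    rcases lt_trichotomy x y with h' | h' | h'
    · nlinarith
    · exact h'
    · nlinarith
  subst hx
  exact ⟨rfl, by omega⟩

/-- the labelling of the product -/
def amF {V₁ V₂ : Type*} [DecidableEq V₁] (n m M : ℕ) (ρ : V₁ → ℕ) (σ : V₂ → ℕ)
    (g : Sym2 V₁ → ℕ) (b : Sym2 V₂ → ℕ) : Sym2 (V₁ × V₂) → ℕ :=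
  Sym2.lift ⟨fun p q => if p.1 = q.1 then n * b s(p.2, q.2) + ρ p.1 + 1
    else n * M + m * min (σ p.2) (σ q.2) + g s(p.1, q.1), by
      intro p q
      by_cases h : p.1 = q.1
      · simp only [h, if_true]
        rw [Sym2.eq_swap]
      · simp only [h, Ne.symm h, if_false]
        rw [Sym2.eq_swap, min_comm]⟩

theorem amF_bij {V₁ V₂ : Type*} [DecidableEq V₁] (G₁ : SimpleGraph V₁) (G₂ : SimpleGraph V₂)
    {n m M N : ℕ} (ρ : V₁ ≃ Fin n) (σ : V₂ ≃ Fin N)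
    {g : Sym2 V₁ → ℕ} {b : Sym2 V₂ → ℕ}
    (hg : Set.BijOn g G₁.edgeSet (Set.Icc 1 m)) (hb : Set.BijOn b G₂.edgeSet (Set.Iio M)) :
    Set.BijOn (amF n m M (fun u => ρ u) (fun v => σ v) g b) (G₁ □ G₂).edgeSet
      (Set.Icc 1 (n * M + m * N)) := by
  -- the two kinds of edges
  have key : ∀ e ∈ (G₁ □ G₂).edgeSet,
      (∃ (u : V₁) (v v' : V₂), e = s((u, v), (u, v')) ∧ s(v, v') ∈ G₂.edgeSet ∧
        amF n m M (fun u => ρ u) (fun v => σ v) g b e = n * b s(v, v') + ρ u + 1) ∨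
      (∃ (u u' : V₁) (v : V₂), e = s((u, v), (u', v)) ∧ s(u, u') ∈ G₁.edgeSet ∧
        amF n m M (fun u => ρ u) (fun v => σ v) g b e = n * M + m * σ v + g s(u, u')) := by
    intro e he
    induction e with
    | _ p q =>
      obtain ⟨u, v⟩ := p
      obtain ⟨u', v'⟩ := q
      rw [SimpleGraph.mem_edgeSet, SimpleGraph.boxProd_adj] at he
      rcases he with ⟨h, h'⟩ | ⟨h, h'⟩
      · right
        simp only at h h'
        subst h'
        exact ⟨u, u', v, rfl, h, by simp [amF, h.ne]⟩
      · left
        simp only at h h'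
        subst h'
        exact ⟨u, v, v', rfl, h, by simp [amF]⟩
  have hlow : ∀ (e : Sym2 V₂) (u : V₁), e ∈ G₂.edgeSet → n * b e + ρ u + 1 ≤ n * M := by
    intro e u he
    have h1 : b e + 1 ≤ M := hb.1 he
    have h2 := (ρ u).2
    nlinarith
  refine ⟨?_, ?_, ?_⟩
  · intro e he
    rcases key e he with ⟨u, v, v', -, h, h'⟩ | ⟨u, u', v, -, h, h'⟩
    · rw [h']
      have := hlow _ u h
      refine ⟨by omega, ?_⟩
      have := Nat.zero_le (m * N)
      omega
    · rw [h']
      obtain ⟨h1, h2⟩ := hg.1 h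
      have h3 : (σ v : ℕ) + 1 ≤ N := (σ v).2
      refine ⟨by omega, ?_⟩
      nlinarith
  · intro e he e' he' hee
    rcases key e he with ⟨u, v, v', rfl, h, h'⟩ | ⟨u, u', v, rfl, h, h'⟩ <;>
    rcases key e' he' with ⟨x, y, y', rfl, k, k'⟩ | ⟨x, x', y, rfl, k, k'⟩
    · rw [h', k'] at hee
      obtain ⟨h1, h2⟩ := am_dm (ρ u).2 (ρ x).2 (by omega : n * b s(v, v') + ρ u = n * b s(y, y') + ρ x)
      have h3 := hb.2.1 h k h1
      have h4 := ρ.injective (Fin.ext h2)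
      subst h4
      rcases Sym2.eq_iff.1 h3 with ⟨rfl, rfl⟩ | ⟨rfl, rfl⟩
      · rfl
      · exact Sym2.eq_swap
    · have := hlow _ u h
      have := (hg.1 k).1
      omega
    · have := hlow _ x k
      have := (hg.1 h).1
      omega
    · rw [h', k'] at hee
      have a1 := hg.1 h
      have a2 := hg.1 k
      obtain ⟨a1, a1'⟩ := a1
      obtain ⟨a2, a2'⟩ := a2
      obtain ⟨h1, h2⟩ := am_dm (n := m) (x := σ v) (y := σ y) (r := g s(u, u') - 1)
        (t := g s(x, x') - 1) (by omega) (by omega) (by omega)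
      have h3 := hg.2.1 h k (by omega)
      have h4 := σ.injective (Fin.ext h1)
      subst h4
      rcases Sym2.eq_iff.1 h3 with ⟨rfl, rfl⟩ | ⟨rfl, rfl⟩
      · rfl
      · exact Sym2.eq_swap
  · rintro y ⟨hy1, hy2⟩
    by_cases hy : y ≤ n * M
    · have hlt : y - 1 < n * M := by omega
      have hn : 0 < n := Nat.pos_of_ne_zero (by rintro rfl; simp at hlt)
      have hq : (y - 1) / n < M := Nat.div_lt_of_lt_mul hlt
      obtain ⟨e, he, hbe⟩ := hb.2.2 hq
      induction e with
      | _ v v' =>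
        let u := ρ.symm ⟨(y-1) % n, Nat.mod_lt _ hn⟩
        refine ⟨s((u, v), (u, v')), ?_, ?_⟩
        · rw [SimpleGraph.mem_edgeSet, SimpleGraph.boxProd_adj]
          exact Or.inr ⟨he, rfl⟩
        · simp only [amF, Sym2.lift_mk, if_true, hbe, u, Equiv.apply_symm_apply]
          have := Nat.div_add_mod (y-1) n
          omega
    · have hlt : y - 1 - n * M < m * N := by omega
      have hm : 0 < m := Nat.pos_of_ne_zero (by rintro rfl; simp at hlt)
      have hq : (y - 1 - n * M) / m < N := Nat.div_lt_of_lt_mul hlt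
      have hr := Nat.mod_lt (y - 1 - n * M) hm
      obtain ⟨e, he, hge⟩ := hg.2.2 (show (y - 1 - n * M) % m + 1 ∈ Set.Icc 1 m from ⟨by omega, by omega⟩)
      induction e with
      | _ u u' =>
        let v := σ.symm ⟨(y - 1 - n * M) / m, hq⟩
        have hne : u ≠ u' := SimpleGraph.Adj.ne he
        refine ⟨s((u, v), (u', v)), ?_, ?_⟩
        · rw [SimpleGraph.mem_edgeSet, SimpleGraph.boxProd_adj]
          exact Or.inl ⟨he, rfl⟩
        · simp only [amF, Sym2.lift_mk, if_neg hne, hge, v, Equiv.apply_symm_apply, min_self]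
          have := Nat.div_add_mod (y - 1 - n * M) m
          omega

theorem amF_sum {V₁ V₂ : Type*} [Fintype V₁] [Fintype V₂] [DecidableEq V₁] [DecidableEq V₂]
    (G₁ : SimpleGraph V₁) (G₂ : SimpleGraph V₂) [DecidableRel G₁.Adj] [DecidableRel G₂.Adj]
    (n m M : ℕ) (ρ : V₁ → ℕ) (σ : V₂ → ℕ) (g : Sym2 V₁ → ℕ) (b : Sym2 V₂ → ℕ) (u : V₁) (v : V₂) :
    vertexSum (G₁ □ G₂) (amF n m M ρ σ g b) (u, v) =
      vertexSum G₁ g u + G₁.degree u * (n * M + m * σ v) +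
      (∑ w ∈ G₂.neighborFinset v, (n * b s(v, w) + 1)) + G₂.degree v * ρ u := by
  classical
  have h0 := am_vs (G₁ □ G₂) (amF n m M ρ σ g b) (u, v)
  rw [h0, SimpleGraph.neighborFinset_boxProd, Finset.sum_disjUnion, am_vs]
  simp only [Finset.sum_product, Finset.sum_singleton]
  have h1 : ∑ x ∈ G₁.neighborFinset u, amF n m M ρ σ g b s((u, v), (x, v)) =
      ∑ x ∈ G₁.neighborFinset u, (g s(u, x) + (n * M + m * σ v)) := by
    refine Finset.sum_congr rfl fun x hx => ?_
    have : u ≠ x := SimpleGraph.Adj.ne (by simpa using hx)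
    simp [amF, this]
    ring
  have h2 : ∑ y ∈ G₂.neighborFinset v, amF n m M ρ σ g b s((u, v), (u, y)) =
      ∑ y ∈ G₂.neighborFinset v, ((n * b s(v, y) + 1) + ρ u) := by
    refine Finset.sum_congr rfl fun x hx => ?_
    simp [amF]
    ring
  rw [h1, h2, Finset.sum_add_distrib, Finset.sum_add_distrib (f := fun y => n * b s(v, y) + 1)]
  simp only [Finset.sum_const, SimpleGraph.card_neighborFinset_eq_degree, smul_eq_mul]
  ring

set_option maxHeartbeats 1000000 in
theorem boxProd_antimagic_even_connected {V₁ V₂ : Type} [Finite V₁] [Finite V₂]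
    {n₁ k₁ k₂ : ℕ} (G₁ : SimpleGraph V₁) (G₂ : SimpleGraph V₂)
    (hn₁ : Nat.card V₁ = n₁)
    (hreg : ∀ v : V₁, Nat.card (G₁.neighborSet v) = k₁)
    (heven : Even k₁) (hconn : G₁.Connected)
    (hmax : ∀ v : V₂, Nat.card (G₂.neighborSet v) ≤ k₂)
    (hmin : ∀ v : V₂, 1 ≤ Nat.card (G₂.neighborSet v))
    (hineq : k₂ ≤ k₁ ^ 2 / 2) (hnot : ¬(k₁ = 2 ∧ k₂ = 2)) :
    IsAntimagic (G₁ □ G₂) := by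
  classical
  have := Fintype.ofFinite V₁
  have := Fintype.ofFinite V₂
  have hdeg : ∀ v, G₁.degree v = k₁ := by
    intro v
    rw [← hreg v, Nat.card_eq_fintype_card, SimpleGraph.card_neighborSet_eq_degree]
  have hd2 : ∀ v, Nat.card (G₂.neighborSet v) = G₂.degree v := by
    intro v
    rw [Nat.card_eq_fintype_card, SimpleGraph.card_neighborSet_eq_degree]
  simp only [hd2] at hmax hmin
  obtain ⟨g, L, hg, hL⟩ := am_label G₁ hconn k₁ heven hdeg
  obtain ⟨b, hb⟩ := am_enum G₂
  set n := Fintype.card V₁ with hn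
  set m := G₁.edgeFinset.card with hm
  set M := G₂.edgeFinset.card with hM
  obtain ⟨ρ, hρ⟩ : ∃ ρ : V₁ ≃ Fin n, ∀ x y, ρ x < ρ y → vertexSum G₁ g x ≤ vertexSum G₁ g y :=
    am_sort (fun u => vertexSum G₁ g u)
  let B : V₂ → ℕ := fun v => ∑ w ∈ G₂.neighborFinset v, (n * b s(v, w) + 1)
  obtain ⟨σ, hσ⟩ := am_sort B
  have hbij := amF_bij G₁ G₂ ρ σ hg hb
  have hcard : Nat.card (G₁ □ G₂).edgeSet = n * M + m * Fintype.card V₂ := by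
    have h1 := Nat.card_congr hbij.equiv
    rw [h1]
    simp
  have hhand : n * k₁ = 2 * m := by
    have := G₁.sum_degrees_eq_twice_card_edges
    simpa [hdeg] using this
  have hnpos : 1 ≤ n := by
    have := hconn.nonempty
    exact Fintype.card_pos
  refine ⟨_, by rw [hcard]; exact hbij, ?_⟩
  have hlt : ∀ u u' v v', σ v < σ v' →
      vertexSum (G₁ □ G₂) (amF n m M (fun u => ρ u) (fun v => σ v) g b) (u, v) <
      vertexSum (G₁ □ G₂) (amF n m M (fun u => ρ u) (fun v => σ v) g b) (u', v') := by
    intro u u' v v' h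
    rw [amF_sum, amF_sum, hdeg, hdeg]
    have h1 : B v ≤ B v' := hσ v v' h
    have h2 := (hL u).2
    have h3 := (hL u').1
    have h4 : (σ v : ℕ) + 1 ≤ σ v' := h
    have h5 : (ρ u : ℕ) + 1 ≤ n := (ρ u).2
    have h6 := hmin v
    have h7 := hmax v
    obtain ⟨t, rfl⟩ := heven
    have h8 : (t + t)^2 / 2 = 2 * t^2 := by
      rw [show (t + t)^2 = 2 * (2 * t^2) by ring]; simp
    rw [h8] at hineq
    have ht : 1 ≤ t := by
      rcases Nat.eq_zero_or_pos t with rfl | h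
      · simp at hineq; omega
      · exact h
    have hmt : m = n * t := by nlinarith
    -- the crucial gap
    have hgap : (t + t) + G₂.degree v * ρ u < (t + t) * m := by
      rw [hmt]
      have h9 : G₂.degree v * ρ u + G₂.degree v ≤ G₂.degree v * n := by nlinarith
      by_cases ht1 : t = 1
      · subst ht1
        have hv1 : G₂.degree v = 1 := by omega
        have hn3 : k₂ = 1 := by omega
        have hn2 : 2 < n := by
          have := G₁.degree_lt_card_verts u
          rw [hdeg] at this
          exact this
        rw [hv1]
        omega
      · have ht2 : 2 ≤ t := by omega
        have h11 : G₂.degree v * ρ u ≤ 2 * t^2 * ρ u := Nat.mul_le_mul_right _ (h7.trans hineq)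
        have h12 : 2 * t^2 * (ρ u + 1) ≤ 2 * t^2 * n := Nat.mul_le_mul_left _ h5
        nlinarith
    have h10 : (t + t) * (n * M + m * σ v) + (t + t) * m ≤ (t + t) * (n * M + m * σ v') := by
      rw [← mul_add]
      refine Nat.mul_le_mul_left _ ?_
      have h13 := Nat.mul_le_mul_left m h4
      rw [mul_add, mul_one] at h13
      omega
    change _ + _ + B v + _ < _ + _ + B v' + _
    have := Nat.zero_le (G₂.degree v' * ρ u')
    omega
  have hlt2 : ∀ u u' v, ρ u < ρ u' →
      vertexSum (G₁ □ G₂) (amF n m M (fun u => ρ u) (fun v => σ v) g b) (u, v) <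
      vertexSum (G₁ □ G₂) (amF n m M (fun u => ρ u) (fun v => σ v) g b) (u', v) := by
    intro u u' v h
    rw [amF_sum, amF_sum, hdeg, hdeg]
    have h1 := hρ u u' h
    have h2 : G₂.degree v * ρ u < G₂.degree v * ρ u' := Nat.mul_lt_mul_of_pos_left h (hmin v)
    omega
  rintro ⟨u, v⟩ ⟨u', v'⟩ hne
  rcases lt_trichotomy (σ v) (σ v') with h | h | h
  · exact (hlt u u' v v' h).ne
  · have := σ.injective h
    subst this
    rcases lt_trichotomy (ρ u) (ρ u') with h' | h' | h'
    · exact (hlt2 u u' v h').ne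
    · exact absurd (by rw [ρ.injective h']) hne
    · exact (hlt2 u' u v h').ne'
  · exact (hlt u' u v' v h).ne'
end

section
/- Let G be a k-regular finite simple graph on n vertices (not necessarily connected), where k ≥ 1 is odd. Then G is (nk/2 − 1)-approximately magic; that is, there exists a bijection f from the edge set of G to {1, 2, ..., nk/2} such that the difference between the largest vertex sum and the smallest vertex sum is at most nk/2 − 1. -/
namespace OddMagic

open Classical in
/-- Weighted sum over the members of the list `l` containing `v`; positions start at `i`. -/
noncomputable def S {V : Type} (a : ℕ → ℤ) (v : V) : List (Sym2 V) → ℕ → ℤ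
  | [], _ => 0
  | e :: l, i => (if v ∈ e then a i else 0) + S a v l (i + 1)

theorem S_append {V : Type} (a : ℕ → ℤ) (v : V) (l₁ l₂ : List (Sym2 V)) (i : ℕ) :
    S a v (l₁ ++ l₂) i = S a v l₁ i + S a v l₂ (i + l₁.length) := by
  induction l₁ generalizing i with
  | nil => simp [S]
  | cons e l ih =>
    simp only [List.cons_append, S, ih, List.length_cons]
    rw [show i + 1 + l.length = i + (l.length + 1) by omega]; ring

open Classical in
theorem S_eq_sum {V : Type} (a : ℕ → ℤ) (v : V) (l : List (Sym2 V)) (hl : l.Nodup) (i : ℕ) :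
    S a v l i = ∑ e ∈ l.toFinset, if v ∈ e then a (i + l.idxOf e) else 0 := by
  induction l generalizing i with
  | nil => simp [S]
  | cons x l ih =>
    rw [List.nodup_cons] at hl
    rw [List.toFinset_cons, Finset.sum_insert (by simpa using hl.1), S, ih hl.2]
    congr 1
    · simp
    · apply Finset.sum_congr rfl
      intro e he
      have hne : x ≠ e := by
        rintro rfl
        exact hl.1 (by simpa using he)
      rw [List.idxOf_cons_ne _ hne]
      rw [show i + 1 + l.idxOf e = i + (l.idxOf e).succ by omega]

/-- The alternating labels `1, m, 2, m-1, …`. -/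
def a (m : ℕ) (i : ℕ) : ℤ := if i % 2 = 0 then (i / 2 : ℕ) + 1 else (m : ℤ) - (i / 2 : ℕ)

theorem a_succ (m i : ℕ) : (m : ℤ) + 1 ≤ a m i + a m (i + 1) ∧
    a m i + a m (i + 1) ≤ (m : ℤ) + 2 := by
  unfold a
  split_ifs <;> omega

/-- Walks with arbitrary endpoints. -/
abbrev TW {V : Type} (G : SimpleGraph V) := Σ u : V, Σ w : V, G.Walk u w

open Classical in
/-- Number of ends of a walk at `v`. -/
noncomputable def ends {V : Type} {G : SimpleGraph V} (v : V) (p : TW G) : ℕ :=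
  (if p.1 = v then 1 else 0) + (if p.2.1 = v then 1 else 0)

open Classical in
theorem walk_S {V : Type} {G : SimpleGraph V} (m : ℕ) (v : V) {u w : V} (p : G.Walk u w) (i : ℕ)
    (hp : 0 < p.length) :
    ∃ T : ℕ, S (fun _ => 1) v p.edges i =
        (if u = v then 1 else 0) + (if w = v then 1 else 0) + 2 * (T : ℤ) ∧
      (if u = v then a m i else 0) + (if w = v then a m (i + p.length - 1) else 0)
        + T * ((m : ℤ) + 1) ≤ S (a m) v p.edges i ∧
      S (a m) v p.edges i ≤
      (if u = v then a m i else 0) + (if w = v then a m (i + p.length - 1) else 0)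
        + T * ((m : ℤ) + 2) := by
  induction p generalizing i with
  | nil => simp at hp
  | @cons u x w h p ih =>
    have hux : u ≠ x := h.ne
    by_cases h0 : 0 < p.length
    · obtain ⟨T, h1, h2, h3⟩ := ih (i + 1) h0
      refine ⟨T + if x = v then 1 else 0, ?_⟩
      have hs := a_succ m i
      have e1 : i + 1 + p.length - 1 = i + p.length := by omega
      simp only [SimpleGraph.Walk.edges_cons, S, SimpleGraph.Walk.length_cons, Sym2.mem_iff, h1]
      rw [e1] at h2 h3
      push_cast
      by_cases hu : u = v <;> by_cases hx : x = v
      · exact absurd (hu.trans hx.symm) hux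
      · simp only [hu, hx, Ne.symm hx, if_true, if_false] at *
        refine ⟨?_, ?_, ?_⟩ <;> simp <;> linarith
      · simp only [hu, hx, Ne.symm hu, if_true, if_false] at *
        refine ⟨?_, ?_, ?_⟩ <;> simp <;> linarith
      · simp only [hu, hx, Ne.symm hu, Ne.symm hx, if_true, if_false] at *
        refine ⟨?_, ?_, ?_⟩ <;> simp <;> linarith
    · cases p with
      | cons _ _ => simp at h0
      | nil =>
        refine ⟨0, ?_⟩
        simp only [SimpleGraph.Walk.edges_cons, S, SimpleGraph.Walk.length_cons, Sym2.mem_iff,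
          SimpleGraph.Walk.edges_nil, SimpleGraph.Walk.length_nil]
        by_cases hu : u = v <;> by_cases hx : x = v
        · exact absurd (hu.trans hx.symm) hux
        · simp [hu, hx]
        · simp [hx, Ne.symm hu, hu]
        · simp [hu, hx, Ne.symm hu, Ne.symm hx]

/-- Bound package: sum `s`, count `c`, ends `d`. -/
def B (m : ℕ) (hi : ℤ) (s c : ℤ) (d : ℕ) : Prop :=
  ∃ T : ℕ, c = d + 2 * (T : ℤ) ∧ d + T * ((m : ℤ) + 1) ≤ s ∧ s ≤ d * hi + T * ((m : ℤ) + 2)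

theorem B.add {m : ℕ} {hi s c s' c' : ℤ} {d d' : ℕ} (h : B m hi s c d) (h' : B m hi s' c' d') :
    B m hi (s + s') (c + c') (d + d') := by
  obtain ⟨T, h1, h2, h3⟩ := h
  obtain ⟨T', h1', h2', h3'⟩ := h'
  refine ⟨T + T', ?_, ?_, ?_⟩ <;> push_cast <;> linarith

theorem walk_B {V : Type} {G : SimpleGraph V} (m : ℕ) (hi : ℤ) (v : V) (p : TW G) (i : ℕ)
    (hp : 0 < p.2.2.length) (h1 : 1 ≤ a m i ∧ a m i ≤ hi)
    (h2 : 1 ≤ a m (i + p.2.2.length - 1) ∧ a m (i + p.2.2.length - 1) ≤ hi) :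
    B m hi (S (a m) v p.2.2.edges i) (S (fun _ => 1) v p.2.2.edges i) (ends v p) := by
  obtain ⟨T, h3, h4, h5⟩ := walk_S m v p.2.2 i hp
  refine ⟨T, ?_, ?_, ?_⟩
  · rw [h3, ends]; push_cast; rfl
  · rw [ends]; push_cast
    refine le_trans ?_ h4
    split_ifs <;> linarith
  · rw [ends]; push_cast
    refine le_trans h5 ?_
    split_ifs <;> linarith

theorem list_B {V : Type} {G : SimpleGraph V} (m : ℕ) (hi : ℤ) (v : V) (L : List (TW G)) (i : ℕ)
    (hp : ∀ p ∈ L, 0 < p.2.2.length)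
    (h : ∀ j, i ≤ j → j < i + (L.flatMap fun p => p.2.2.edges).length → 1 ≤ a m j ∧ a m j ≤ hi) :
    B m hi (S (a m) v (L.flatMap fun p => p.2.2.edges) i)
      (S (fun _ => 1) v (L.flatMap fun p => p.2.2.edges) i) (L.map (ends v)).sum := by
  induction L generalizing i with
  | nil => exact ⟨0, by simp [S], by simp [S], by simp [S]⟩
  | cons p L ih =>
    simp only [List.flatMap_cons, List.map_cons, List.sum_cons, S_append, List.length_append,
      SimpleGraph.Walk.length_edges] at h ⊢
    have hp0 := hp p (by simp)
    refine (walk_B m hi v p i hp0 (h _ le_rfl (by omega)) (h _ (by omega) (by omega))).add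
      (ih _ (fun q hq => hp q (by simp [hq])) ?_)
    intro j hj hj'
    exact h j (by omega) (by omega)

theorem count_parity {V : Type} {G : SimpleGraph V} (v : V) (L : List (TW G)) (i : ℕ)
    (hp : ∀ p ∈ L, 0 < p.2.2.length) :
    ∃ T : ℕ, S (fun _ => 1) v (L.flatMap fun p => p.2.2.edges) i =
      (L.map (ends v)).sum + 2 * (T : ℤ) := by
  induction L generalizing i with
  | nil => exact ⟨0, by simp [S]⟩
  | cons p L ih =>
    obtain ⟨T, hT, -⟩ := walk_S 0 v p.2.2 i (hp p (by simp))
    obtain ⟨T', hT'⟩ := ih (i + p.2.2.edges.length) (fun q hq => hp q (by simp [hq]))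
    refine ⟨T + T', ?_⟩
    simp only [List.flatMap_cons, List.map_cons, List.sum_cons, S_append]
    rw [hT, hT', ends]
    push_cast
    ring

/-- `L` is a trail decomposition of the edges. -/
def Dec {V : Type} (G : SimpleGraph V) (L : List (TW G)) : Prop :=
  (∀ p ∈ L, 0 < p.2.2.length) ∧ (L.flatMap fun p => p.2.2.edges).Nodup ∧
    ∀ e, e ∈ (L.flatMap fun p => p.2.2.edges) ↔ e ∈ G.edgeSet

theorem Dec.perm {V : Type} {G : SimpleGraph V} {L L' : List (TW G)} (h : Dec G L)
    (hL : L.Perm L') : Dec G L' := by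
  have := hL.flatMap_right (fun p : TW G => p.2.2.edges)
  refine ⟨fun p hp => h.1 p (hL.mem_iff.2 hp), this.nodup_iff.1 h.2.1, fun e => ?_⟩
  rw [← this.mem_iff, h.2.2]

theorem Dec.merge {V : Type} {G : SimpleGraph V} {p q r : TW G} {L : List (TW G)}
    (h : Dec G (p :: q :: L)) (hr : r.2.2.edges.Perm (p.2.2.edges ++ q.2.2.edges)) :
    Dec G (r :: L) := by
  have key : ((r :: L).flatMap fun p => p.2.2.edges).Perm
      ((p :: q :: L).flatMap fun p => p.2.2.edges) := by
    simp only [List.flatMap_cons, ← List.append_assoc]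
    exact hr.append_right _
  refine ⟨?_, key.nodup_iff.2 h.2.1, fun e => by rw [key.mem_iff, h.2.2]⟩
  intro s hs
  rcases List.mem_cons.1 hs with rfl | hs
  · have h1 := hr.length_eq
    have h2 := h.1 p (by simp)
    simp only [List.length_append, SimpleGraph.Walk.length_edges] at h1
    omega
  · exact h.1 s (by simp [hs])

theorem exists_merge {V : Type} {G : SimpleGraph V} (v : V) (p q : TW G)
    (hp : 1 ≤ ends v p) (hq : 1 ≤ ends v q) :
    ∃ r : TW G, r.2.2.edges.Perm (p.2.2.edges ++ q.2.2.edges) := by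
  obtain ⟨u, w, p⟩ := p
  obtain ⟨x, y, q⟩ := q
  have hp' : ∃ (s : V) (p' : G.Walk s v), p'.edges.Perm p.edges := by
    by_cases h1 : w = v
    · subst h1; exact ⟨_, p, List.Perm.refl _⟩
    · by_cases h2 : u = v
      · subst h2
        exact ⟨_, p.reverse, by rw [SimpleGraph.Walk.edges_reverse]; exact List.reverse_perm _⟩
      · simp [ends, h1, h2] at hp
  have hq' : ∃ (s : V) (p' : G.Walk v s), p'.edges.Perm q.edges := by
    by_cases h1 : x = v
    · subst h1; exact ⟨_, q, List.Perm.refl _⟩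
    · by_cases h2 : y = v
      · subst h2
        exact ⟨_, q.reverse, by rw [SimpleGraph.Walk.edges_reverse]; exact List.reverse_perm _⟩
      · simp [ends, h1, h2] at hq
  obtain ⟨s, p', hp'⟩ := hp'
  obtain ⟨t, q', hq'⟩ := hq'
  refine ⟨⟨s, t, p'.append q'⟩, ?_⟩
  simp only [SimpleGraph.Walk.edges_append]
  exact hp'.append hq'

theorem exists_dec_list {V : Type} (G : SimpleGraph V) (l : List (Sym2 V))
    (hl : ∀ e ∈ l, e ∈ G.edgeSet) :
    ∃ L : List (TW G), (∀ p ∈ L, 0 < p.2.2.length) ∧ (L.flatMap fun p => p.2.2.edges) = l := by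
  induction l with
  | nil => exact ⟨[], by simp, by simp⟩
  | cons e l ih =>
    obtain ⟨L, h1, h2⟩ := ih (fun e he => hl e (by simp [he]))
    have he := hl e (by simp)
    induction e with
    | h x y =>
      have hxy : G.Adj x y := he
      refine ⟨⟨x, y, hxy.toWalk⟩ :: L, ?_, ?_⟩
      · intro p hp
        rcases List.mem_cons.1 hp with rfl | hp
        · simp
        · exact h1 p hp
      · simp [h2]

theorem exists_min_dec {V : Type} [Finite V] (G : SimpleGraph V) :
    ∃ L, Dec G L ∧ ∀ L', Dec G L' → L.length ≤ L'.length := by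
  classical
  have hne : ∃ n, ∃ L, Dec G L ∧ L.length = n := by
    have hf := G.edgeSet.toFinite
    obtain ⟨L, h1, h2⟩ := exists_dec_list G hf.toFinset.toList (by simp)
    refine ⟨_, L, ⟨h1, ?_, ?_⟩, rfl⟩
    · rw [h2]; exact Finset.nodup_toList _
    · rw [h2]; simp
  obtain ⟨L, hL, hlen⟩ := Nat.find_spec hne
  exact ⟨L, hL, fun L' h' => hlen ▸ Nat.find_min' hne ⟨L', h', rfl⟩⟩

theorem exists_of_sum_pos {α : Type} (g : α → ℕ) (L : List α) (h : 0 < (L.map g).sum) :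
    ∃ p ∈ L, 1 ≤ g p := by
  by_contra hc
  push Not at hc
  have : (L.map g).sum = 0 := by
    rw [List.sum_eq_zero]
    intro x hx
    obtain ⟨p, hp, rfl⟩ := List.mem_map.1 hx
    have := hc p hp
    omega
  omega

theorem ends_le {V : Type} {G : SimpleGraph V} (v : V) (p : TW G) : ends v p ≤ 2 := by
  unfold ends; split_ifs <;> omega

theorem min_ends {V : Type} {G : SimpleGraph V} (L : List (TW G)) (hL : Dec G L)
    (hmin : ∀ L', Dec G L' → L.length ≤ L'.length) (v : V) : (L.map (ends v)).sum ≤ 2 := by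
  classical
  by_contra hc
  push Not at hc
  obtain ⟨p, hp, hp1⟩ := exists_of_sum_pos (ends v) L (by omega)
  have hP := List.perm_cons_erase hp
  have hs := (hP.map (ends v)).sum_eq
  simp only [List.map_cons, List.sum_cons] at hs
  have := ends_le v p
  obtain ⟨q, hq, hq1⟩ := exists_of_sum_pos (ends v) (L.erase p) (by omega)
  have hP2 := List.perm_cons_erase hq
  have hP3 := hP.trans (hP2.cons p)
  obtain ⟨r, hr⟩ := exists_merge v p q hp1 hq1
  have := hmin _ ((hL.perm hP3).merge hr)
  have h2 := hP3.length_eq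
  simp only [List.length_cons] at h2 this
  omega

theorem sum_ends {V : Type} [Fintype V] {G : SimpleGraph V} (L : List (TW G)) :
    ∑ v, (L.map (ends v)).sum = 2 * L.length := by
  classical
  induction L with
  | nil => simp
  | cons p L ih =>
    simp only [List.map_cons, List.sum_cons, Finset.sum_add_distrib, ih, List.length_cons]
    simp [ends, Finset.sum_add_distrib]
    omega

theorem length_flat_le {V : Type} {G : SimpleGraph V} (L : List (TW G)) (c : ℕ)
    (h : ∀ p ∈ L, p.2.2.length ≤ c) :
    (L.flatMap fun p => p.2.2.edges).length ≤ L.length * c := by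
  induction L with
  | nil => simp
  | cons p L ih =>
    have := ih (fun q hq => h q (by simp [hq]))
    have h1 := h p (by simp)
    simp only [List.flatMap_cons, List.length_append, SimpleGraph.Walk.length_edges,
      List.length_cons]
    linarith

open Classical in
theorem S_eq_vertexSum {V : Type} [Finite V] {G : SimpleGraph V} (L : List (TW G)) (hL : Dec G L)
    (g : ℕ → ℤ) (v : V) :
    S g v (L.flatMap fun p => p.2.2.edges) 0 = ∑ e ∈ (G.incidenceSet v).toFinite.toFinset,
      g ((L.flatMap fun p => p.2.2.edges).idxOf e) := by
  rw [S_eq_sum _ _ _ hL.2.1, ← Finset.sum_filter]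
  apply Finset.sum_congr
  · ext e
    simp only [Finset.mem_filter, List.mem_toFinset, hL.2.2, Set.Finite.mem_toFinset,
      SimpleGraph.incidenceSet, Set.mem_ofPred_eq]
  · simp

theorem a_good {m k j : ℕ} (hk : k % 2 = 1) (hkm : k ≤ m) (hj : j = 0 ∨ k - 1 ≤ j) (hm : j < m) :
    1 ≤ a m j ∧ a m j ≤ (m : ℤ) - (k / 2 : ℕ) := by
  unfold a
  split_ifs <;> omega

end OddMagic

/-- A `k`-regular graph on `n` vertices with `k ≥ 1` odd (not necessarily connected)
is `(nk/2 − 1)`-approximately magic. -/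
theorem odd_regular_approx_magic {V : Type} [Finite V] {n k : ℕ}
    (G : SimpleGraph V) (hn : Nat.card V = n)
    (hreg : ∀ v : V, Nat.card (G.neighborSet v) = k)
    (hk1 : 1 ≤ k) (hodd : Odd k) :
    ∃ f : Sym2 V → ℕ,
      Set.BijOn f G.edgeSet (Set.Icc 1 (n * k / 2)) ∧
      ∀ u v : V, vertexSum G f u ≤ vertexSum G f v + (n * k / 2 - 1) := by
  classical
  have : Fintype V := Fintype.ofFinite V
  have hk2 : k % 2 = 1 := Nat.odd_iff.1 hodd
  obtain ⟨L₀, hL₀, hmin⟩ := OddMagic.exists_min_dec G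
  -- degree count
  have hdeg : ∀ v, (G.incidenceSet v).toFinite.toFinset.card = k := by
    intro v
    rw [← hreg v, ← Nat.card_eq_card_finite_toFinset]
    exact Nat.card_congr (G.incidenceSetEquivNeighborSet v)
  have hcount : ∀ L, OddMagic.Dec G L → ∀ v,
      OddMagic.S (fun _ => 1) v (L.flatMap fun p => p.2.2.edges) 0 = k := by
    intro L hL v
    rw [OddMagic.S_eq_vertexSum L hL]
    rw [Finset.sum_const, hdeg v]
    simp
  have hlen : ∀ L, OddMagic.Dec G L → 2 * (L.flatMap fun p => p.2.2.edges).length = n * k := by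
    intro L hL
    have h1 : (L.flatMap fun p => p.2.2.edges).length = G.edgeFinset.card := by
      rw [← List.toFinset_card_of_nodup hL.2.1]
      congr 1
      ext e
      rw [List.mem_toFinset, hL.2.2, SimpleGraph.mem_edgeFinset]
    have h2 := G.sum_degrees_eq_twice_card_edges
    rw [h1, ← h2, ← hn, Nat.card_eq_fintype_card]
    have : ∀ v, G.degree v = k := by
      intro v
      rw [← hreg v, Nat.card_eq_fintype_card, SimpleGraph.card_neighborSet_eq_degree]
    simp [this]
  have hends0 : ∀ v, (L₀.map (OddMagic.ends v)).sum = 1 := by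
    intro v
    have h2 := OddMagic.min_ends L₀ hL₀ hmin v
    have hc := hcount L₀ hL₀ v
    -- use parity with trivially large bounds
    obtain ⟨T, hT⟩ : ∃ T : ℕ, (k : ℤ) = (L₀.map (OddMagic.ends v)).sum + 2 * (T : ℤ) := by
      rw [← hc]
      exact OddMagic.count_parity v L₀ 0 hL₀.1
    omega
  rcases Nat.eq_zero_or_pos n with rfl | hnpos
  · have hem : IsEmpty V := by
      rw [Nat.card_eq_fintype_card] at hn
      exact Fintype.card_eq_zero_iff.1 hn
    refine ⟨fun _ => 0, ?_, fun u => (hem.false u).elim⟩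
    have : G.edgeSet = ∅ := by
      ext e
      induction e with
      | h x y => exact (hem.false x).elim
    simp [this]
  have hLn : 2 * L₀.length = n := by
    rw [← OddMagic.sum_ends L₀, ← hn]
    simp [hends0]
  obtain ⟨p, hp, hpk⟩ : ∃ p ∈ L₀, k ≤ p.2.2.length := by
    by_contra hc
    push Not at hc
    have h1 := OddMagic.length_flat_le L₀ (k - 1) (fun p hp => by have := hc p hp; omega)
    have h2 := hlen L₀ hL₀
    obtain ⟨k', rfl⟩ : ∃ k', k = k' + 1 := ⟨k - 1, by omega⟩
    simp only [Nat.add_sub_cancel] at h1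
    nlinarith
  have hP := List.perm_cons_erase hp
  generalize L₀.erase p = R at hP
  have hL := hL₀.perm hP
  have hends : ∀ v, ((p :: R).map (OddMagic.ends v)).sum = 1 := fun v => by
    rw [← (hP.map (OddMagic.ends v)).sum_eq, hends0]
  have hm := hlen _ hL
  obtain ⟨m, hmdef⟩ : ∃ m, m = n * k / 2 := ⟨_, rfl⟩
  rw [← hmdef]
  have hlm : ((p :: R).flatMap fun p => p.2.2.edges).length = m := by omega
  have hp0 := hL.1 p (by simp)
  have hplen : p.2.2.length + (R.flatMap fun p => p.2.2.edges).length = m := by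
    rw [← hlm]; simp
  have hkm : k ≤ m := by omega
  have hB : ∀ v, OddMagic.B m ((m : ℤ) - (k / 2 : ℕ))
      (OddMagic.S (OddMagic.a m) v ((p :: R).flatMap fun p => p.2.2.edges) 0)
      (OddMagic.S (fun _ => 1) v ((p :: R).flatMap fun p => p.2.2.edges) 0) 1 := by
    intro v
    rw [← hends v]
    simp only [List.flatMap_cons, OddMagic.S_append, List.map_cons, List.sum_cons]
    refine (OddMagic.walk_B m _ v p 0 hp0 ?_ ?_).add (OddMagic.list_B m _ v R _ ?_ ?_)
    · exact OddMagic.a_good hk2 hkm (Or.inl rfl) (by omega)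
    · exact OddMagic.a_good hk2 hkm (Or.inr (by omega)) (by omega)
    · exact fun q hq => hL.1 q (by simp [hq])
    · intro j h1 h2
      rw [SimpleGraph.Walk.length_edges] at h1 h2
      exact OddMagic.a_good hk2 hkm (Or.inr (by omega)) (by omega)
  have hS := OddMagic.S_eq_vertexSum (p :: R) hL (OddMagic.a m)
  have hcnt := hcount _ hL
  have hnd := hL.2.1
  have hmem := hL.2.2
  generalize ((p :: R).flatMap fun p => p.2.2.edges) = F at *
  have hidx : ∀ e ∈ G.edgeSet, F.idxOf e < m := fun e he => by
    rw [← hlm]; exact List.idxOf_lt_length_iff.2 ((hmem e).2 he)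
  have hrange : ∀ j < m, 1 ≤ OddMagic.a m j ∧ OddMagic.a m j ≤ m := by
    intro j hj
    unfold OddMagic.a
    split_ifs <;> omega
  refine ⟨fun e => (OddMagic.a m (F.idxOf e)).toNat, ⟨?_, ?_, ?_⟩, ?_⟩
  · intro e he
    have := hrange _ (hidx e he)
    simp only [Set.mem_Icc]
    omega
  · intro e he e' he' hee
    have h1 := hidx e he
    have h2 := hidx e' he'
    have h3 := hrange _ h1
    have h4 := hrange _ h2
    have h5 : OddMagic.a m (F.idxOf e) = OddMagic.a m (F.idxOf e') := by
      simp only at hee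
      omega
    have h6 : F.idxOf e = F.idxOf e' := by
      unfold OddMagic.a at h5
      split_ifs at h5 <;> omega
    exact (List.idxOf_inj ((hmem e).2 he)).1 h6
  · intro y hy
    rw [Set.mem_Icc] at hy
    obtain ⟨j, hj, hjy⟩ : ∃ j < m, OddMagic.a m j = y := by
      by_cases h : 2 * (y - 1) < m
      · refine ⟨2 * (y - 1), h, ?_⟩
        unfold OddMagic.a
        split_ifs <;> omega
      · refine ⟨2 * (m - y) + 1, by omega, ?_⟩
        unfold OddMagic.a
        split_ifs <;> omega
    have hjF : j < F.length := by omega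
    refine ⟨F[j], (hmem _).1 (List.getElem_mem hjF), ?_⟩
    simp only [hnd.idxOf_getElem j hjF, hjy]
    simp
  · have hvs : ∀ v, ((vertexSum G (fun e => (OddMagic.a m (F.idxOf e)).toNat) v : ℕ) : ℤ)
        = OddMagic.S (OddMagic.a m) v F 0 := by
      intro v
      rw [hS v, vertexSum, Nat.cast_sum]
      apply Finset.sum_congr rfl
      intro e he
      have he' : e ∈ G.edgeSet := ((Set.Finite.mem_toFinset _).1 he).1
      have := hrange _ (hidx e he')
      omega
    intro u v
    obtain ⟨T, h1, h2, h3⟩ := hB u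
    obtain ⟨T', h1', h2', h3'⟩ := hB v
    rw [hcnt] at h1 h1'
    rw [← hvs] at h2 h3 h2' h3'
    have hT : T = k / 2 := by omega
    have hT' : T' = k / 2 := by omega
    subst hT hT'
    zify [show 1 ≤ m by omega]
    push_cast at *
    linarith
end

section
/- Let G be a k-regular finite simple graph on n vertices (not necessarily connected), where k ≥ 2 is even. Then G is (2n/3 + k − 1)-approximately magic; that is, there exists a bijection f from the edge set of G to {1, 2, ..., nk/2} such that the difference D between the largest vertex sum and the smallest vertex sum satisfies D ≤ 2n/3 + k − 1 (equivalently, 3·D ≤ 2n + 3(k − 1)). -/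
namespace AM
variable {V : Type} 

/-- Two fixed point free involutions have a common alternating two-colouring. -/
lemma two_colour {X : Type} [Finite X] (σ τ : Equiv.Perm X)
    (hσ : ∀ x, σ (σ x) = x) (hτ : ∀ x, τ (τ x) = x)
    (hσ' : ∀ x, σ x ≠ x) (hτ' : ∀ x, τ x ≠ x) :
    ∃ c : X → Prop, ∀ x, (c (σ x) ↔ ¬ c x) ∧ (c (τ x) ↔ ¬ c x) := by
  classical
  set ρ : Equiv.Perm X := σ * τ with hρ
  have hσ1 : σ * σ = 1 := by ext x; simp [hσ]
  have hτ1 : τ * τ = 1 := by ext x; simp [hτ]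
  have hsi : σ⁻¹ = σ := inv_eq_of_mul_eq_one_left hσ1
  have hti : τ⁻¹ = τ := inv_eq_of_mul_eq_one_left hτ1
  have hconj1 : σ * ρ * σ⁻¹ = ρ⁻¹ := by
    rw [hρ, mul_inv_rev, hsi, hti, ← mul_assoc σ σ τ, hσ1, one_mul]
  have hconj : ∀ k : ℤ, σ * ρ ^ k = ρ ^ (-k) * σ := by
    intro k
    have : σ * ρ ^ k * σ⁻¹ = ρ ^ (-k) := by
      rw [← conj_zpow, hconj1, inv_zpow']
    rw [← this, inv_mul_cancel_right]
  have hconj' : ∀ (k : ℤ) x, σ ((ρ ^ k) x) = (ρ ^ (-k)) (σ x) := by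
    intro k x
    have := congrArg (fun p : Equiv.Perm X => p x) (hconj k)
    simpa using this
  have hτρ : ∀ x, τ x = σ (ρ x) := by intro x; simp [hρ, hσ]
  have hns : ∀ x, ¬ ρ.SameCycle x (σ x) := by
    rintro x ⟨k, hk⟩
    rcases Int.even_or_odd' k with ⟨j, rfl | rfl⟩
    · apply hσ' ((ρ ^ j) x)
      rw [hconj', ← hk, ← Equiv.Perm.mul_apply, ← zpow_add]
      congr 2; ring
    · apply hτ' ((ρ ^ j) x)
      have h1 : ρ ((ρ ^ j) x) = (ρ ^ (1 + j)) x := by rw [zpow_one_add]; rfl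
      rw [hτρ, h1, hconj', ← hk, ← Equiv.Perm.mul_apply, ← zpow_add]
      congr 2; ring
  let S := Equiv.Perm.SameCycle.setoid ρ
  obtain ⟨m, ⟨e⟩⟩ := Finite.exists_equiv_fin (Quotient S)
  let q : X → Fin m := fun x => e (Quotient.mk S x)
  have hq : ∀ x y, q x = q y ↔ ρ.SameCycle x y := by
    intro x y
    simp only [q, e.injective.eq_iff]
    exact Quotient.eq (r := S)
  have h1 : ∀ x, q (τ x) = q (σ x) := by
    intro x
    rw [hq, hτρ]
    have := hconj' 1 x
    rw [zpow_one] at this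
    rw [this]
    exact ⟨1, by rw [← Equiv.Perm.mul_apply, ← zpow_add]; simp⟩
  have h2 : ∀ x, q (σ (τ x)) = q x := by
    intro x
    rw [hq]
    exact ⟨-1, by rw [show σ (τ x) = (ρ ^ (1:ℤ)) x by simp [hρ], ← Equiv.Perm.mul_apply, ← zpow_add]; simp⟩
  have h3 : ∀ x, q x ≠ q (σ x) := fun x h => hns x ((hq _ _).1 h)
  refine ⟨fun x => q x < q (σ x), fun x => ⟨?_, ?_⟩⟩
  · simp only [hσ]
    have := h3 x
    rw [not_lt, le_iff_lt_or_eq]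
    tauto
  · simp only [h1, h2]
    have := h3 x
    rw [not_lt, le_iff_lt_or_eq]
    tauto

/-- Regular bipartite relations split into permutations. -/
lemma split_perms [Fintype V] [DecidableEq V] (r : ℕ) : ∀ (O : V → V → Prop),
    (∀ v, Nat.card {w // O v w} = r) → (∀ v, Nat.card {w // O w v} = r) →
    ∃ π : Fin r → Equiv.Perm V, (∀ j v, O v (π j v)) ∧ (∀ i j v, π i v = π j v → i = j) ∧
      ∀ v w, O v w → ∃ j, π j v = w := by
  classical
  induction r with
  | zero =>
    intro O h1 h2
    refine ⟨fun j => j.elim0, fun j => j.elim0, fun j => j.elim0, fun v w h => ?_⟩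
    have := h1 v
    rw [Nat.card_eq_zero] at this
    rcases this with h' | h'
    · exact (h'.false ⟨w, h⟩).elim
    · exact (not_finite_iff_infinite.2 h' inferInstance).elim
  | succ r ih =>
    intro O h1 h2
    have h1' : ∀ v, (Finset.univ.filter (fun w => O v w)).card = r + 1 := by
      intro v; rw [← h1 v, Nat.card_eq_fintype_card, Fintype.card_subtype]
    have h2' : ∀ v, (Finset.univ.filter (fun w => O w v)).card = r + 1 := by
      intro v; rw [← h2 v, Nat.card_eq_fintype_card, Fintype.card_subtype]
    obtain ⟨f, hf, hfO⟩ := (Finset.all_card_le_biUnion_card_iff_exists_injective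
      (fun v : V => Finset.univ.filter (fun w => O v w))).1 (by
        intro s
        have := Finset.card_mul_le_card_mul (s := s)
          (t := s.biUnion (fun v : V => Finset.univ.filter (fun w => O v w))) O
          (m := r + 1) (n := r + 1) (by
            intro a ha
            rw [← h1' a]
            apply Finset.card_le_card
            intro w hw
            simp only [Finset.mem_filter, Finset.mem_univ, true_and] at hw
            simp only [Finset.mem_bipartiteAbove, Finset.mem_biUnion, Finset.mem_filter,
              Finset.mem_univ, true_and]
            exact ⟨⟨a, ha, hw⟩, hw⟩) (by
            intro b hb
            rw [← h2' b]
            apply Finset.card_le_card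
            intro w hw
            simp only [Finset.mem_bipartiteBelow] at hw
            simpa using hw.2)
        exact Nat.le_of_mul_le_mul_right this (Nat.succ_pos r))
    have hfO' : ∀ v, O v (f v) := fun v => by simpa using hfO v
    let p : Equiv.Perm V := Equiv.ofBijective f (Finite.injective_iff_bijective.1 hf)
    have hp : ∀ v, p v = f v := fun v => rfl
    obtain ⟨π, hπ1, hπ2, hπ3⟩ := ih (fun v w => O v w ∧ w ≠ f v) (by
        intro v
        rw [Nat.card_eq_fintype_card, Fintype.card_subtype]
        have : Finset.univ.filter (fun w => O v w ∧ w ≠ f v)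
            = (Finset.univ.filter (fun w => O v w)).erase (f v) := by
          ext w; simp; tauto
        rw [this, Finset.card_erase_of_mem (by simpa using hfO' v), h1']; rfl) (by
        intro v
        rw [Nat.card_eq_fintype_card, Fintype.card_subtype]
        have : Finset.univ.filter (fun w => O w v ∧ v ≠ f w)
            = (Finset.univ.filter (fun w => O w v)).erase (p.symm v) := by
          ext w
          have : v = f w ↔ w = p.symm v := by
            rw [Equiv.eq_symm_apply, hp, eq_comm]
          simp [this]; tauto
        rw [this, Finset.card_erase_of_mem, h2']; · rfl
        have := hfO' (p.symm v)
        rw [← hp, Equiv.apply_symm_apply] at this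
        simpa using this)
    refine ⟨Fin.cons p π, ?_, ?_, ?_⟩
    · intro j
      refine Fin.cases ?_ ?_ j
      · intro v; exact hfO' v
      · intro i v; exact (hπ1 i v).1
    · intro i j v
      refine Fin.cases ?_ (fun i => ?_) i <;> refine Fin.cases ?_ (fun j => ?_) j
      · simp
      · simp only [Fin.cons_zero, Fin.cons_succ]
        intro h; exact ((hπ1 j v).2 h.symm).elim
      · simp only [Fin.cons_zero, Fin.cons_succ]
        intro h; exact ((hπ1 i v).2 h).elim
      · simp only [Fin.cons_succ]
        intro h; rw [hπ2 i j v h]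
    · intro v w h
      by_cases hw : w = f v
      · exact ⟨0, hw.symm⟩
      · obtain ⟨j, hj⟩ := hπ3 v w ⟨h, hw⟩
        exact ⟨j.succ, hj⟩

/-- Eulerian orientation. -/
lemma orient [Fintype V] [DecidableEq V] (G : SimpleGraph V) (r : ℕ)
    (hreg : ∀ v : V, Nat.card (G.neighborSet v) = r * 2) :
    ∃ O : V → V → Prop, (∀ u v, O u v → G.Adj u v) ∧ (∀ u v, G.Adj u v → (O v u ↔ ¬ O u v)) ∧
      (∀ v, Nat.card {w // O v w} = r) ∧ (∀ v, Nat.card {w // O w v} = r) := by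
  classical
  have he : ∀ v, Nonempty (G.neighborSet v ≃ Fin r × Fin 2) := by
    intro v
    have : Nat.card (G.neighborSet v) = Nat.card (Fin r × Fin 2) := by
      rw [hreg]; simp
    exact Finite.card_eq.1 this
  have e := fun v => (he v).some
  let fl : Fin r × Fin 2 → Fin r × Fin 2 := fun x => (x.1, 1 - x.2)
  have fl2 : ∀ x, fl (fl x) = x := by rintro ⟨a, b⟩; simp [fl]
  have fl1 : ∀ x, fl x ≠ x := by
    rintro ⟨a, b⟩ h
    simp only [fl, Prod.mk.injEq, true_and] at h
    revert h; revert b; decide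
  let X := Σ v : V, G.neighborSet v
  let σf : X → X := fun x => ⟨x.2.1, ⟨x.1, (show G.Adj _ _ from x.2.2).symm⟩⟩
  let τf : X → X := fun x => ⟨x.1, (e x.1).symm (fl (e x.1 x.2))⟩
  have hσ : Function.Involutive σf := by rintro ⟨a, b, h⟩; rfl
  have hτ : Function.Involutive τf := by rintro ⟨a, b⟩; simp [τf, fl2]
  obtain ⟨c, hc⟩ := two_colour hσ.toPerm hτ.toPerm hσ hτ (by
      rintro ⟨a, b, h⟩ h'
      have := congrArg Sigma.fst h'
      exact (show G.Adj a b from h).ne this.symm) (by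
      rintro ⟨a, b⟩ h'
      have h' : (⟨a, (e a).symm (fl (e a b))⟩ : X) = ⟨a, b⟩ := h'
      simp only [Sigma.mk.injEq, heq_eq_eq, true_and] at h'
      rw [Equiv.symm_apply_eq] at h'
      exact fl1 _ h')
  have hcs : ∀ u v (h : G.Adj u v), c ⟨v, u, h.symm⟩ ↔ ¬ c ⟨u, v, h⟩ := fun u v h => (hc ⟨u, v, h⟩).1
  have hout : ∀ v, Nat.card {w : G.neighborSet v // c ⟨v, w⟩} = r ∧
      Nat.card {w : G.neighborSet v // ¬ c ⟨v, w⟩} = r := by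
    intro v
    let t : G.neighborSet v → G.neighborSet v := fun w => (e v).symm (fl (e v w))
    have ht : Function.Involutive t := by intro w; simp [t, fl2]
    have E : {w : G.neighborSet v // c ⟨v, w⟩} ≃ {w : G.neighborSet v // ¬ c ⟨v, w⟩} :=
      Equiv.subtypeEquiv ht.toPerm (fun w => by
        have := (hc ⟨v, w⟩).2
        have h2 : c ⟨v, t w⟩ ↔ ¬ c ⟨v, w⟩ := this
        show _ ↔ ¬ c ⟨v, t w⟩
        rw [h2, not_not])
    have h1 := Nat.card_congr E
    have h2 := Nat.card_congr (Equiv.sumCompl (fun w : G.neighborSet v => c ⟨v, w⟩))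
    rw [Nat.card_sum, hreg] at h2
    omega
  refine ⟨fun u v => ∃ h : G.Adj u v, c ⟨u, v, h⟩, ?_, ?_, ?_, ?_⟩
  · rintro u v ⟨h, -⟩; exact h
  · intro u v h
    constructor
    · rintro ⟨h1, h2⟩ ⟨h3, h4⟩
      exact (hcs u v h).1 h2 h4
    · intro h1
      exact ⟨h.symm, (hcs u v h).2 fun h2 => h1 ⟨h, h2⟩⟩
  · intro v
    rw [← (hout v).1]
    exact Nat.card_congr ⟨fun w => ⟨⟨w.1, w.2.1⟩, w.2.2⟩, fun w => ⟨w.1.1, w.1.2, w.2⟩,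
      fun _ => rfl, fun _ => rfl⟩
  · intro v
    rw [← (hout v).2]
    exact Nat.card_congr ⟨fun w => ⟨⟨w.1, w.2.1.symm⟩, (hcs _ _ w.2.1).not.2 (not_not.2 w.2.2)⟩,
      fun w => ⟨w.1.1, (show G.Adj _ _ from w.1.2).symm, (hcs _ _ w.1.2).2 w.2⟩,
      fun _ => rfl, fun _ => rfl⟩

/-- Ranks of an injective integer key. -/
lemma rank_bij [Fintype V] (K : V → ℤ) (hK : Function.Injective K) (f : V → ℕ)
    (hf : ∀ v, f v = (Finset.univ.filter (fun w => K w ≤ K v)).card) :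
    Set.BijOn f Set.univ (Set.Icc 1 (Fintype.card V)) := by
  classical
  have hmono : ∀ v w, K v < K w → f v < f w := by
    intro v w h
    rw [hf, hf]
    apply Finset.card_lt_card
    rw [Finset.ssubset_iff_of_subset]
    · exact ⟨w, by simp, by simpa using h⟩
    · intro x; simp only [Finset.mem_filter, Finset.mem_univ, true_and]; intro; omega
  have hinj : Function.Injective f := by
    intro v w h
    apply hK
    rcases lt_trichotomy (K v) (K w) with h' | h' | h'
    · have := hmono _ _ h'; omega
    · exact h'
    · have := hmono _ _ h'; omega
  have hmaps : ∀ v, f v ∈ Finset.Icc 1 (Fintype.card V) := by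
    intro v
    rw [Finset.mem_Icc, hf]
    exact ⟨Finset.card_pos.2 ⟨v, by simp⟩, Finset.card_le_univ _⟩
  refine ⟨fun v _ => by simpa using hmaps v, hinj.injOn, ?_⟩
  have := Finset.eq_of_subset_of_card_le (s := Finset.univ.image f) (t := Finset.Icc 1 (Fintype.card V))
    (by intro x hx; simp only [Finset.mem_image, Finset.mem_univ, true_and] at hx
        obtain ⟨v, rfl⟩ := hx; exact hmaps v)
    (by rw [Finset.card_image_of_injective _ hinj]; simp)
  intro x hx
  have hx' : x ∈ Finset.univ.image f := by rw [this]; simpa using hx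
  simpa using hx'

lemma rank_lip [Fintype V] (K : V → ℤ) (hK : Function.Injective K) (f : V → ℕ)
    (hf : ∀ v, f v = (Finset.univ.filter (fun w => K w ≤ K v)).card) (v w : V)
    (d : ℕ) (h : K w ≤ K v + d) : f w ≤ f v + d := by
  classical
  rw [hf, hf]
  have h1 : (Finset.univ.filter (fun x => K x ≤ K w)) ⊆ (Finset.univ.filter (fun x => K x ≤ K v)) ∪
      (Finset.univ.filter (fun x => K v < K x ∧ K x ≤ K v + d)) := by
    intro x; simp only [Finset.mem_filter, Finset.mem_univ, true_and, Finset.mem_union]; omega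
  have h2 : (Finset.univ.filter (fun x => K v < K x ∧ K x ≤ K v + d)).card ≤ d := by
    calc _ = ((Finset.univ.filter (fun x => K v < K x ∧ K x ≤ K v + d)).image K).card :=
          (Finset.card_image_of_injective _ hK).symm
      _ ≤ (Finset.Ioc (K v) (K v + d)).card := by
          apply Finset.card_le_card
          intro y hy
          simp only [Finset.mem_image, Finset.mem_filter, Finset.mem_univ, true_and] at hy
          obtain ⟨x, hx, rfl⟩ := hy
          exact Finset.mem_Ioc.2 hx
      _ = d := by simp
  have h3 := Finset.card_le_card h1
  have h4 := Finset.card_union_le (Finset.univ.filter (fun x => K x ≤ K v))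
      (Finset.univ.filter (fun x => K v < K x ∧ K x ≤ K v + d))
  omega

/-- Centred cyclic coordinates for a permutation. -/
lemma coords [Fintype V] (π : Equiv.Perm V) :
    ∃ (N : ℕ) (c : V → Fin N) (A : V → ℤ) (R : V → V), Function.Surjective c ∧
      (∀ v w, c v = c w → A v = A w → v = w) ∧ (∀ v, c (π v) = c v) ∧ (∀ v, c (R v) = c v) ∧
      (∀ v, A (R v) = - A v) ∧ (∀ v, A (π v) = A v + 1 ∨ A (π v) = - A v) := by
  classical
  let S := Equiv.Perm.SameCycle.setoid π
  obtain ⟨N, ⟨e⟩⟩ := Finite.exists_equiv_fin (Quotient S)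
  let rep : Fin N → V := fun i => (e.symm i).out
  let c : V → Fin N := fun v => e (Quotient.mk S v)
  have hc : ∀ v w, c v = c w ↔ π.SameCycle v w := by
    intro x y
    simp only [c, e.injective.eq_iff]
    exact Quotient.eq (r := S)
  have hrep : ∀ i, c (rep i) = i := by
    intro i; simp [c, rep]
  let l : Fin N → ℕ := fun i => Function.minimalPeriod π (rep i)
  have hl : ∀ i, 0 < l i := fun i => by
    apply Function.minimalPeriod_pos_of_mem_periodicPts
    exact (Function.Injective.mem_periodicPts π.injective _)
  have hit : ∀ i p, c (π^[p] (rep i)) = i := by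
    intro i p
    rw [← hrep i]
    rw [hc, hrep]
    refine Equiv.Perm.SameCycle.symm ⟨p, ?_⟩
    rw [zpow_natCast, Equiv.Perm.iterate_eq_pow]
  have hp : ∀ v, ∃ p, p < l (c v) ∧ π^[p] (rep (c v)) = v := by
    intro v
    have h1 : π.SameCycle (rep (c v)) v := by rw [← hc, hrep]
    obtain ⟨i, hi⟩ := h1.exists_nat_pow_eq
    refine ⟨i % l (c v), Nat.mod_lt _ (hl _), ?_⟩
    rw [Function.iterate_mod_minimalPeriod_eq, Equiv.Perm.iterate_eq_pow, hi]
  choose p hp1 hp2 using hp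
  have huniq : ∀ i a, a < l i → p (π^[a] (rep i)) = a := by
    intro i a ha
    have h1 := hp1 (π^[a] (rep i))
    have h2 := hp2 (π^[a] (rep i))
    rw [hit] at h1 h2
    exact (Function.iterate_eq_iterate_iff_of_lt_minimalPeriod h1 ha).1 h2
  have hcπ : ∀ v, c (π v) = c v := by
    intro v
    have := hit (c v) (p v + 1)
    rwa [Function.iterate_succ_apply', hp2] at this
  have hpπ : ∀ v, p (π v) = if p v + 1 = l (c v) then 0 else p v + 1 := by
    intro v
    have h0 : π v = π^[p v + 1] (rep (c v)) := by rw [Function.iterate_succ_apply', hp2]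
    split_ifs with h
    · rw [h0, h, Function.iterate_minimalPeriod]
      exact huniq (c v) 0 (hl _)
    · rw [h0]
      apply huniq
      have := hp1 v
      omega
  let F : ℕ → ℕ → ℤ := fun l p => if l % 2 = 1 then (p : ℤ) - (l / 2 : ℕ) else
    if p < l / 2 then (p : ℤ) - (l / 2 : ℕ) else (p : ℤ) - (l / 2 : ℕ) + 1
  let R : V → V := fun v => π^[l (c v) - 1 - p v] (rep (c v))
  have hcR : ∀ v, c (R v) = c v := fun v => hit _ _
  have hpR : ∀ v, p (R v) = l (c v) - 1 - p v := fun v => huniq _ _ (by have := hp1 v; omega)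
  refine ⟨N, c, fun v => F (l (c v)) (p v), R, fun i => ⟨rep i, hrep i⟩, ?_, hcπ, hcR, ?_, ?_⟩
  · intro v w h1 h2
    have h3 : p v = p w := by
      simp only [F, h1] at h2
      split_ifs at h2 <;> omega
    rw [← hp2 v, ← hp2 w, h1, h3]
  · intro v
    have := hp1 v
    simp only [F, hcR, hpR]
    split_ifs <;> omega
  · intro v
    have := hp1 v
    simp only [F, hcπ, hpπ]
    split_ifs <;> omega

/-- Every permutation has bandwidth at most two. -/
lemma bandwidth [Fintype V] (π : Equiv.Perm V) :
    ∃ x : V → ℕ, Set.BijOn x Set.univ (Set.Icc 1 (Fintype.card V)) ∧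
      ∀ v, x (π v) ≤ x v + 2 ∧ x v ≤ x (π v) + 2 := by
  classical
  obtain ⟨N, c, A, R, hs, hinj, hcπ, hcR, hAR, hA⟩ := coords π
  let B : V → ℤ := fun v => if 0 < A v then 2 * A v else 1 - 2 * A v
  have hB0 : ∀ v, 0 ≤ B v := by intro v; simp only [B]; split_ifs <;> omega
  have hBi : ∀ v w, B v = B w → A v = A w := by
    intro v w; simp only [B]; split_ifs <;> omega
  have hBs : ∀ v, B (π v) ≤ B v + 2 ∧ B v ≤ B (π v) + 2 := by
    intro v
    have := hA v
    simp only [B]; split_ifs <;> omega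
  let M : ℤ := 1 + ∑ v, B v
  have hBM : ∀ v, B v < M := by
    intro v
    have := Finset.single_le_sum (f := B) (fun i _ => hB0 i) (Finset.mem_univ v)
    simp only [M]; omega
  let K : V → ℤ := fun v => (c v : ℕ) * M + B v
  have hKi : Function.Injective K := by
    intro v w h
    have hv := hB0 v
    have hw := hB0 w
    have hv' := hBM v
    have hw' := hBM w
    have hM : 0 < M := by omega
    simp only [K] at h
    have hcc : ((c v : ℕ) : ℤ) = (c w : ℕ) := by
      have h1 := congrArg (fun z : ℤ => z / M) h
      beta_reduce at h1
      rw [mul_comm, Int.mul_add_ediv_left _ _ hM.ne', Int.ediv_eq_zero_of_lt hv hv',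
        mul_comm, Int.mul_add_ediv_left _ _ hM.ne', Int.ediv_eq_zero_of_lt hw hw'] at h1
      omega
    rw [hcc] at h
    apply hinj
    · apply Fin.ext; exact_mod_cast hcc
    · apply hBi; omega
  refine ⟨fun v => (Finset.univ.filter (fun w => K w ≤ K v)).card,
    rank_bij K hKi _ (fun v => rfl), fun v => ⟨?_, ?_⟩⟩
  · refine rank_lip K hKi _ (fun v => rfl) v (π v) 2 ?_
    have := hBs v
    simp only [K, hcπ]; push_cast; omega
  · refine rank_lip K hKi _ (fun v => rfl) (π v) v 2 ?_
    have := hBs v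
    simp only [K, hcπ]; push_cast; omega

lemma count_le [Fintype V] {N : ℕ} (c : V → Fin N) (P Q : V → Prop)
    [DecidablePred P] [DecidablePred Q]
    (h : ∀ v w, P v → ¬ Q v → P w → ¬ Q w → c v = c w → v = w) :
    (Finset.univ.filter P).card ≤ (Finset.univ.filter Q).card + N := by
  classical
  have h1 : Finset.univ.filter P ⊆ Finset.univ.filter Q ∪ Finset.univ.filter (fun v => P v ∧ ¬ Q v) := by
    intro x; simp; tauto
  have h2 : (Finset.univ.filter (fun v => P v ∧ ¬ Q v)).card ≤ N := by
    have := Finset.card_le_card_of_injOn (s := Finset.univ.filter (fun v => P v ∧ ¬ Q v))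
      (t := (Finset.univ : Finset (Fin N))) c (by simp) (by
        intro v hv w hw hvw
        simp at hv hw
        exact h v w hv.1 hv.2 hw.1 hw.2 hvw)
    simpa using this
  have h3 := Finset.card_le_card h1
  have h4 := Finset.card_union_le (Finset.univ.filter Q) (Finset.univ.filter (fun v => P v ∧ ¬ Q v))
  omega

/-- The labelling of a single two-factor. -/
lemma factor [Fintype V] (π : Equiv.Perm V) (h1 : ∀ v, π v ≠ v) (h2 : ∀ v, π (π v) ≠ v) :
    ∃ x : V → ℕ, Set.BijOn x Set.univ (Set.Icc 1 (Fintype.card V)) ∧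
      ∃ N, 3 * N ≤ Fintype.card V ∧ ∀ v, x v + x (π v) ≤ Fintype.card V + 1 + N ∧
        Fintype.card V + 1 ≤ x v + x (π v) + N := by
  classical
  obtain ⟨N, c, A, R, hs, hinj, hcπ, hcR, hAR, hA⟩ := coords π
  have hN : 3 * N ≤ Fintype.card V := by
    have := Finset.mul_card_image_le_card (f := c) Finset.univ 3 (by
      intro b _
      obtain ⟨v, rfl⟩ := hs b
      have : ({v, π v, π (π v)} : Finset V).card = 3 :=
        Finset.card_eq_three.2 ⟨v, π v, π (π v), (h1 v).symm, (h2 v).symm, (h1 (π v)).symm, rfl⟩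
      rw [← this]
      apply Finset.card_le_card
      intro w hw
      simp only [Finset.mem_insert, Finset.mem_singleton] at hw
      rcases hw with rfl | rfl | rfl <;> simp [hcπ])
    rw [Finset.image_univ_of_surjective hs] at this
    simpa using this
  let g : Fin N → ℤ := fun i => 2 * (i : ℕ) - (N - 1)
  have hg : ∀ i, g i ≤ N - 1 ∧ -(N - 1 : ℤ) ≤ g i := by
    intro i; have := i.2; simp only [g]; omega
  have hgi : ∀ i j, g i = g j → i = j := by
    intro i j h; simp only [g] at h; apply Fin.ext; omega
  -- level and signed offset
  let L : V → ℤ := fun v => if Even (A v) then A v else - A v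
  let s : V → ℤ := fun v => if Even (A v) then g (c v) else - g (c v)
  let K : V → ℤ := fun v => 2 * N * L v + s v
  have hsb : ∀ v, s v ≤ N - 1 ∧ -(N - 1 : ℤ) ≤ s v := by
    intro v; have := hg (c v); simp only [s]; split_ifs <;> omega
  have hLi : ∀ v w, L v = L w → A v = A w := by
    intro v w h
    simp only [L, Int.even_iff] at h
    split_ifs at h <;> omega
  have hev : ∀ v, Even (L v) ↔ Even (A v) := by
    intro v; simp only [L]; split_ifs <;> simp
  have hLR : ∀ v, L (R v) = - L v := by
    intro v; simp only [L, hAR, even_neg]; split_ifs <;> simp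
  have hsR : ∀ v, s (R v) = s v := by
    intro v; simp only [s, hAR, even_neg, hcR]
  have hKR : ∀ v, K (R v) = - (2 * N * L v) + s v := by
    intro v; simp only [K, hLR, hsR]; ring
  have hRi : Function.Injective R := by
    intro v w h
    apply hinj
    · rw [← hcR v, h, hcR]
    · have := hAR v; rw [h, hAR] at this; omega
  have hKi : Function.Injective K := by
    intro v w h
    simp only [K] at h
    have hv := hsb v
    have hw := hsb w
    have hL : L v = L w := by
      rcases lt_trichotomy (L v) (L w) with h' | h' | h'
      · nlinarith
      · exact h'
      · nlinarith
    have hA' := hLi _ _ hL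
    rw [hL] at h
    refine hinj _ _ (hgi _ _ ?_) hA'
    simp only [s, hA'] at h
    split_ifs at h <;> omega
  -- consecutive keys
  have hKK : ∀ v, K v + K (π v) ≤ 2 * N ∧ -(2 * N : ℤ) ≤ K v + K (π v) := by
    intro v
    have hgv := hg (c v)
    rcases hA v with h | h
    · have : (L v + L (π v) = 1 ∨ L v + L (π v) = -1) ∧ s v + s (π v) = 0 := by
        simp only [L, s, hcπ, h, Int.even_iff]
        split_ifs <;> omega
      obtain ⟨h3, h4⟩ := this
      have h5 : K v + K (π v) = 2 * N * (L v + L (π v)) := by simp only [K]; linear_combination h4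
      rw [h5]
      rcases h3 with h3 | h3 <;> rw [h3] <;> omega
    · have : L v + L (π v) = 0 := by
        simp only [L, h, even_neg]
        split_ifs <;> omega
      have h5 : K v + K (π v) = s v + s (π v) := by simp only [K]; linear_combination 2 * N * this
      have := hsb v
      have := hsb (π v)
      omega
  -- two distinct elements of a cycle
  have key : ∀ v w, c v = c w → L v < L w → 2 * (N : ℤ) ≤ 2 * N * (L w - L v) + (s w + s v) ∧
      2 * (N : ℤ) ≤ 2 * N * (L w - L v) - (s w + s v) := by
    intro v w hc hlt
    have hv := hsb v
    have hw := hsb w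
    rcases eq_or_ne (L w) (L v + 1) with h | h
    · have : s w + s v = 0 := by
        have e1 : Even (A w) ↔ ¬ Even (A v) := by rw [← hev, ← hev, h, Int.even_add_one]
        simp only [s, e1, hc]
        by_cases h6 : Even (A v) <;> simp [h6]
      rw [this, h]; constructor <;> linarith
    · have : 2 ≤ L w - L v := by omega
      constructor <;> nlinarith
  let f : V → ℕ := fun v => (Finset.univ.filter (fun w => K w ≤ K v)).card
  -- reflected count
  have hrefl : ∀ v, f v + (Finset.univ.filter (fun w => K v ≤ K (R w))).card = Fintype.card V + 1 := by
    intro v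
    have e1 : (Finset.univ.filter (fun w => K v ≤ K (R w))).card
        = (Finset.univ.filter (fun w => K v ≤ K w)).card := by
      refine Finset.card_bijective R (Finite.injective_iff_bijective.1 hRi) ?_
      intro w; simp
    have e2 : (Finset.univ.filter (fun w => K w ≤ K v)) ∪ (Finset.univ.filter (fun w => K v ≤ K w))
        = Finset.univ := by
      ext w; simp; omega
    have e3 : (Finset.univ.filter (fun w => K w ≤ K v)) ∩ (Finset.univ.filter (fun w => K v ≤ K w))
        = {v} := by
      ext w
      simp only [Finset.mem_inter, Finset.mem_filter, Finset.mem_univ, true_and,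
        Finset.mem_singleton]
      constructor
      · intro h; apply hKi; omega
      · rintro rfl; simp
    have := Finset.card_union_add_card_inter (Finset.univ.filter (fun w => K w ≤ K v))
      (Finset.univ.filter (fun w => K v ≤ K w))
    rw [e2, e3, Finset.card_univ, Finset.card_singleton] at this
    rw [e1]
    exact this.symm
  have aux : ∀ v w, c v = c w → L v = L w → v = w := fun v w h h' => hinj _ _ h (hLi _ _ h')
  refine ⟨f, rank_bij K hKi f (fun v => rfl), N, hN, fun v => ?_⟩
  have hv := hrefl (π v)
  have hk := hKK v
  have c1 : f v ≤ (Finset.univ.filter (fun w => K (π v) ≤ K (R w))).card + N := by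
    apply count_le c
    intro a b ha1 ha2 hb1 hb2 hab
    rw [not_le, hKR] at ha2 hb2
    simp only [K] at ha1 hb1 ha2 hb2 hk
    rcases lt_trichotomy (L a) (L b) with h | h | h
    · have := (key a b hab h).1; linarith
    · exact aux _ _ hab h
    · have := (key b a hab.symm h).1; linarith
  have c2 : (Finset.univ.filter (fun w => K (π v) ≤ K (R w))).card ≤ f v + N := by
    apply count_le c
    intro a b ha1 ha2 hb1 hb2 hab
    rw [hKR] at ha1 hb1
    rw [not_le] at ha2 hb2
    simp only [K] at ha1 hb1 ha2 hb2 hk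
    rcases lt_trichotomy (L a) (L b) with h | h | h
    · have := (key a b hab h).2; linarith
    · exact aux _ _ hab h
    · have := (key b a hab.symm h).2; linarith
  omega
/-- Petersen: an even regular graph is a disjoint union of oriented two-factors. -/
lemma petersen [Fintype V] [DecidableEq V] (G : SimpleGraph V) (r : ℕ)
    (hreg : ∀ v : V, Nat.card (G.neighborSet v) = r * 2) :
    ∃ π : Fin r → Equiv.Perm V,
      Function.Injective (fun x : V × Fin r => s(x.1, π x.2 x.1)) ∧
      Set.range (fun x : V × Fin r => s(x.1, π x.2 x.1)) = G.edgeSet := by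
  obtain ⟨O, hO1, hO2, hO3, hO4⟩ := orient G r hreg
  obtain ⟨π, h1, h2, h3⟩ := split_perms r O hO3 hO4
  refine ⟨π, ?_, ?_⟩
  · rintro ⟨v, i⟩ ⟨w, j⟩ h
    simp only [Sym2.eq_iff] at h
    rcases h with ⟨rfl, h⟩ | ⟨h, h'⟩
    · rw [h2 i j v h]
    · exfalso
      have a := h1 i v
      have b := h1 j w
      rw [h'] at a
      rw [← h] at b
      exact (hO2 _ _ (hO1 _ _ a)).1 b a
  · ext e
    induction e using Sym2.ind with
    | _ u v =>
    simp only [Set.mem_range, Prod.exists, SimpleGraph.mem_edgeSet]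
    constructor
    · rintro ⟨a, j, h⟩
      have := hO1 _ _ (h1 j a)
      rw [← SimpleGraph.mem_edgeSet] at this ⊢
      rwa [← h]
    · intro h
      by_cases h' : O u v
      · obtain ⟨j, hj⟩ := h3 u v h'
        exact ⟨u, j, by rw [hj]⟩
      · obtain ⟨j, hj⟩ := h3 v u ((hO2 u v h).2 h')
        exact ⟨v, j, by rw [hj, Sym2.eq_swap]⟩

lemma pair_label [Fintype V] (p q : Equiv.Perm V) :
    ∃ x y : V → ℕ, Set.BijOn x Set.univ (Set.Icc 1 (Fintype.card V)) ∧
      Set.BijOn y Set.univ (Set.Icc 1 (Fintype.card V)) ∧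
      ∀ u v, x u + x (p.symm u) + (y u + y (q.symm u)) ≤
        x v + x (p.symm v) + (y v + y (q.symm v)) + 4 := by
  obtain ⟨x, hx, hb⟩ := bandwidth (p.trans q.symm)
  have hr : ∀ v, 1 ≤ x v ∧ x v ≤ Fintype.card V := fun v => hx.mapsTo (Set.mem_univ v)
  refine ⟨x, fun v => Fintype.card V + 1 - x v, hx, ⟨?_, ?_, ?_⟩, ?_⟩
  · intro v _; have := hr v; simp only [Set.mem_Icc]; omega
  · intro v _ w _ h
    have := hr v; have := hr w
    apply hx.injOn (Set.mem_univ _) (Set.mem_univ _)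
    simp only at h; omega
  · intro a ha
    obtain ⟨v, -, hv⟩ := hx.surjOn (show Fintype.card V + 1 - a ∈ Set.Icc 1 (Fintype.card V) by
      simp only [Set.mem_Icc] at ha ⊢; omega)
    simp only [Set.mem_Icc] at ha
    exact ⟨v, trivial, by simp only [hv]; omega⟩
  · intro u v
    have a := hb (p.symm u)
    have b := hb (p.symm v)
    simp only [Equiv.trans_apply, Equiv.apply_symm_apply] at a b
    have := hr u; have := hr v; have := hr (q.symm u); have := hr (q.symm v)
    simp only
    omega

/-- Labelling an even number of factors on top of a given number of factors. -/
lemma step_label [Fintype V] (r B : ℕ) (p : Fin (r + 2) → Equiv.Perm V)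
    (h : ∃ y : Fin r → V → ℕ, (∀ j, Set.BijOn (y j) Set.univ (Set.Icc 1 (Fintype.card V))) ∧
      ∀ u v, ∑ j, (y j u + y j ((p j.succ.succ).symm u)) ≤
        ∑ j, (y j v + y j ((p j.succ.succ).symm v)) + B) :
    ∃ y : Fin (r + 2) → V → ℕ, (∀ j, Set.BijOn (y j) Set.univ (Set.Icc 1 (Fintype.card V))) ∧
      ∀ u v, ∑ j, (y j u + y j ((p j).symm u)) ≤ ∑ j, (y j v + y j ((p j).symm v)) + (B + 4) := by
  obtain ⟨y, hy, hB⟩ := h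
  obtain ⟨a, b, ha, hb, hab⟩ := pair_label (p 0) (p (Fin.succ 0))
  refine ⟨Fin.cons a (Fin.cons b y), ?_, ?_⟩
  · intro j
    refine Fin.cases ha (fun j => ?_) j
    refine Fin.cases hb (fun j => ?_) j
    exact hy j
  · intro u v
    simp only [Fin.sum_univ_succ (n := r + 1), Fin.sum_univ_succ (n := r), Fin.cons_zero,
      Fin.cons_succ]
    have := hB u v
    have := hab u v
    omega

lemma even_label [Fintype V] (s : ℕ) : ∀ (p : Fin (2 * s) → Equiv.Perm V),
    ∃ y : Fin (2 * s) → V → ℕ, (∀ j, Set.BijOn (y j) Set.univ (Set.Icc 1 (Fintype.card V))) ∧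
      ∀ u v, ∑ j, (y j u + y j ((p j).symm u)) ≤ ∑ j, (y j v + y j ((p j).symm v)) + 4 * s := by
  induction s with
  | zero => intro p; exact ⟨fun _ _ => 0, fun j => j.elim0, by simp⟩
  | succ s ih => intro p; exact step_label (2 * s) (4 * s) p (ih _)

lemma odd_label [Fintype V] (s : ℕ) : ∀ (p : Fin (2 * s + 1) → Equiv.Perm V)
    (_ : ∀ j v, p j v ≠ v) (_ : ∀ j v, p j (p j v) ≠ v),
    ∃ y : Fin (2 * s + 1) → V → ℕ,
      (∀ j, Set.BijOn (y j) Set.univ (Set.Icc 1 (Fintype.card V))) ∧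
      ∀ u v, ∑ j, (y j u + y j ((p j).symm u)) ≤ ∑ j, (y j v + y j ((p j).symm v)) +
        (2 * (Fintype.card V / 3) + 4 * s) := by
  induction s with
  | zero =>
    intro p h1 h2
    obtain ⟨x, hx, N, hN, hb⟩ := factor (p 0) (h1 0) (h2 0)
    refine ⟨fun _ => x, fun _ => hx, fun u v => ?_⟩
    have a := hb ((p 0).symm u)
    have b := hb ((p 0).symm v)
    rw [Equiv.apply_symm_apply] at a b
    simp only [Nat.mul_zero, Nat.zero_add, Fin.sum_univ_one]
    have : N ≤ Fintype.card V / 3 := by omega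
    have e : ∀ w, ∑ j : Fin (2 * 0 + 1), (x w + x ((p j).symm w)) = x w + x ((p 0).symm w) := by
      intro w; exact Fin.sum_univ_one _
    simp only [e]
    omega
  | succ s ih =>
    intro p h1 h2
    exact step_label (2 * s + 1) (2 * (Fintype.card V / 3) + 4 * s) p
      (ih _ (fun j => h1 _) (fun j => h2 _))

/-- Assemble a labelling of the graph from labellings of the factors. -/
lemma assemble [Fintype V] [DecidableEq V] (G : SimpleGraph V) (r : ℕ)
    (π : Fin r → Equiv.Perm V)
    (hinj : Function.Injective (fun x : V × Fin r => s(x.1, π x.2 x.1)))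
    (hran : Set.range (fun x : V × Fin r => s(x.1, π x.2 x.1)) = G.edgeSet)
    (hne : ∀ j v, π j v ≠ v)
    (y : Fin r → V → ℕ) (hy : ∀ j, Set.BijOn (y j) Set.univ (Set.Icc 1 (Fintype.card V))) :
    ∃ f : Sym2 V → ℕ, Set.BijOn f G.edgeSet (Set.Icc 1 (Fintype.card V * r)) ∧
      ∃ C, ∀ v, vertexSum G f v = ∑ j, (y j v + y j ((π j).symm v)) + C := by
  classical
  set φ : V × Fin r → Sym2 V := fun x => s(x.1, π x.2 x.1) with hφ
  set n := Fintype.card V with hn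
  have hr : ∀ j v, 1 ≤ y j v ∧ y j v ≤ n := fun j v => (hy j).mapsTo (Set.mem_univ v)
  let g : V × Fin r → ℕ := fun x => n * x.2 + y x.2 x.1
  let f : Sym2 V → ℕ := Function.extend φ g 0
  have hf : ∀ x, f (φ x) = g x := fun x => hinj.extend_apply g 0 x
  have hmaps : ∀ x, g x ∈ Finset.Icc 1 (n * r) := by
    rintro ⟨v, j⟩
    have h1 := hr j v
    have h2 : n * (j + 1) ≤ n * r := Nat.mul_le_mul_left n j.2
    rw [Nat.mul_add, Nat.mul_one] at h2
    simp only [Finset.mem_Icc, g]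
    omega
  have hginj : Function.Injective g := by
    rintro ⟨v, i⟩ ⟨w, j⟩ h
    simp only [g] at h
    have h1 := hr i v
    have h2 := hr j w
    have hij : i = j := by
      apply Fin.ext
      rcases lt_trichotomy (i : ℕ) j with h' | h' | h'
      · have := Nat.mul_le_mul_left n (Nat.succ_le_of_lt h')
        rw [Nat.succ_eq_add_one, Nat.mul_add, Nat.mul_one] at this; omega
      · exact h'
      · have := Nat.mul_le_mul_left n (Nat.succ_le_of_lt h')
        rw [Nat.succ_eq_add_one, Nat.mul_add, Nat.mul_one] at this; omega
    subst hij
    have : v = w := (hy i).injOn (Set.mem_univ _) (Set.mem_univ _) (by omega)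
    rw [this]
  have himg : Finset.univ.image g = Finset.Icc 1 (n * r) := by
    apply Finset.eq_of_subset_of_card_le
    · intro x hx
      simp only [Finset.mem_image, Finset.mem_univ, true_and] at hx
      obtain ⟨v, rfl⟩ := hx; exact hmaps v
    · rw [Finset.card_image_of_injective _ hginj]; simp [hn]
  refine ⟨f, ⟨?_, ?_, ?_⟩, ∑ j : Fin r, 2 * (n * (j : ℕ)), ?_⟩
  · rw [← hran]
    rintro _ ⟨x, rfl⟩
    rw [hf]; simpa using hmaps x
  · rw [← hran]
    rintro _ ⟨x, rfl⟩ _ ⟨z, rfl⟩ h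
    rw [hf, hf] at h
    rw [hginj h]
  · intro a ha
    have : a ∈ Finset.univ.image g := by rw [himg]; simpa using ha
    simp only [Finset.mem_image, Finset.mem_univ, true_and] at this
    obtain ⟨x, rfl⟩ := this
    exact ⟨φ x, by rw [← hran]; exact ⟨x, rfl⟩, hf x⟩
  · intro v
    have h1 : (G.incidenceSet v).toFinite.toFinset
        = (Finset.univ.filter (fun x : V × Fin r => v ∈ φ x)).image φ := by
      ext e
      simp only [Set.Finite.mem_toFinset, SimpleGraph.incidenceSet, ← hran, Finset.mem_image,
        Finset.mem_filter, Finset.mem_univ, true_and, Set.mem_setOf_eq, Set.mem_range]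
      constructor
      · rintro ⟨⟨x, rfl⟩, h⟩; exact ⟨x, h, rfl⟩
      · rintro ⟨x, h, rfl⟩; exact ⟨⟨x, rfl⟩, h⟩
    rw [vertexSum, h1, Finset.sum_image hinj.injOn, Finset.sum_filter, Fintype.sum_prod_type_right,
      ← Finset.sum_add_distrib]
    apply Finset.sum_congr rfl
    intro j _
    have h2 : ∀ u, (if v ∈ φ (u, j) then f (φ (u, j)) else 0)
        = (if u = v then g (u, j) else 0) + (if u = (π j).symm v then g (u, j) else 0) := by
      intro u
      rw [hf]
      have e1 : v ∈ φ (u, j) ↔ u = v ∨ u = (π j).symm v := by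
        simp only [hφ, Sym2.mem_iff, Equiv.eq_symm_apply]
        tauto
      have e2 : ¬ (u = v ∧ u = (π j).symm v) := by
        rintro ⟨rfl, h⟩
        rw [Equiv.eq_symm_apply] at h
        exact hne j u h
      by_cases a : u = v <;> by_cases b : u = (π j).symm v
      · exact (e2 ⟨a, b⟩).elim
      · rw [if_pos (e1.2 (Or.inl a)), if_pos a, if_neg b, add_zero]
      · rw [if_pos (e1.2 (Or.inr b)), if_neg a, if_pos b, zero_add]
      · rw [if_neg (fun h => (e1.1 h).elim a b), if_neg a, if_neg b]
    rw [Finset.sum_congr rfl (fun u _ => h2 u), Finset.sum_add_distrib, Finset.sum_ite_eq',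
      Finset.sum_ite_eq']
    simp only [Finset.mem_univ, if_true, g]
    ring
end AM

/-- A `k`-regular graph on `n` vertices with `k ≥ 2` even (not necessarily connected)
is `(2n/3 + k − 1)`-approximately magic: the difference `D` between any two vertex sums
satisfies `3·D ≤ 2n + 3(k − 1)`. -/
theorem even_regular_approx_magic {V : Type} [Finite V] {n k : ℕ}
    (G : SimpleGraph V) (hn : Nat.card V = n)
    (hreg : ∀ v : V, Nat.card (G.neighborSet v) = k)
    (hk2 : 2 ≤ k) (heven : Even k) :
    ∃ f : Sym2 V → ℕ,
      Set.BijOn f G.edgeSet (Set.Icc 1 (n * k / 2)) ∧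
      ∀ u v : V, 3 * vertexSum G f u ≤ 3 * vertexSum G f v + (2 * n + 3 * (k - 1)) := by
  classical
  have := Fintype.ofFinite V
  rw [Nat.card_eq_fintype_card] at hn
  obtain ⟨r, rfl⟩ := heven
  obtain ⟨π, hinj, hran⟩ := AM.petersen G r (fun v => by rw [hreg]; ring)
  have hne : ∀ j v, π j v ≠ v := by
    intro j v h
    have : s(v, π j v) ∈ G.edgeSet := by rw [← hran]; exact ⟨(v, j), rfl⟩
    rw [h, SimpleGraph.mem_edgeSet] at this
    exact G.loopless.irrefl v this
  have hne2 : ∀ j v, π j (π j v) ≠ v := by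
    intro j v h
    have := @hinj (v, j) (π j v, j) (by simp only [h]; exact Sym2.eq_swap)
    exact hne j v (congrArg Prod.fst this).symm
  have hcard : n * (r + r) / 2 = Fintype.card V * r := by
    rw [hn, ← mul_two, ← mul_assoc, Nat.mul_div_cancel _ (by norm_num)]
  rw [hcard]
  have hn2 : ∀ v : V, 2 ≤ n := by
    intro v
    have h : 0 < r := by omega
    have := Finset.card_le_univ ({v, π ⟨0, h⟩ v} : Finset V)
    rw [Finset.card_pair (hne _ v).symm, hn] at this
    exact this
  rcases Nat.even_or_odd' r with ⟨s, rfl | rfl⟩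
  · obtain ⟨y, hy, hb⟩ := AM.even_label s π
    obtain ⟨f, hf, C, hC⟩ := AM.assemble G _ π hinj hran hne y hy
    refine ⟨f, hf, fun u v => ?_⟩
    rw [hC, hC]
    have := hb u v
    have := hn2 u
    omega
  · obtain ⟨y, hy, hb⟩ := AM.odd_label s π hne hne2
    obtain ⟨f, hf, C, hC⟩ := AM.assemble G _ π hinj hran hne y hy
    refine ⟨f, hf, fun u v => ?_⟩
    rw [hC, hC]
    have := hb u v
    omega
end
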